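/- arXiv:1211.1058 — 5 statements merged into one kernel-verified Lean document; each statement's English description precedes it below -/
import Mathlib

section
/- For every dimension s ≥ 1 and every δ ∈ (0,1] there exists a δ-bracketing cover Δ of [0,1]^s with |Δ| ≤ 2^{s−1} · e^s · (δ^{−1} + 1)^s; that is, the minimal cardinality 𝒩_{[ ]}(s,δ) of a δ-bracketing cover of [0,1]^s satisfies 𝒩_{[ ]}(s,δ) ≤ 2^{s−1} e^s (δ^{−1} + 1)^s. -/
/-!
Cut the first coordinate at `1 = a 0 ≥ a 1 ≥ ... ≥ a J = 0` and lift to the slab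
`[a (j + 1), a j] × [0,1]^n` a bracketing cover of `[0,1]^n`. Since
`a * ∏ z - b * ∏ x = a * (∏ z - ∏ x) + (a - b) * ∏ x`, a bracket of weight at most `η` is lifted to
one of weight at most `a * η + (a - b)`, so the covers in low slabs may be coarse.

With the rescaled parameter `u = s / δ`, cut at `a j = max (u - j) 0 / u` and use in the `j`-th slab
a cover with rescaled parameter `u - j`: by induction on the dimension, `(u + s) ^ s / s!` brackets
suffice, the sum over the slabs being a lower Riemann sum for the integral of `x ^ n / n!` over
`[0, u + n + 1]`. Finally `(u + s) ^ s / s! = s ^ s / s! * (δ⁻¹ + 1) ^ s` and `s ^ s / s! ≤ exp s`.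
-/

open Real

/-- `Δ` is a `δ`-bracketing cover of `[0,1]^s`: a finite set of pairs `(x,z)` of points of
`[0,1]^s` with `x ≤ z` and `λ([0,z)) - λ([0,x)) = ∏ zᵢ - ∏ xᵢ ≤ δ`, such that every
`y ∈ [0,1]^s` satisfies `x ≤ y ≤ z` for some pair `(x,z) ∈ Δ`. -/
def IsDeltaBracketingCover (s : ℕ) (δ : ℝ) (Δ : Finset ((Fin s → ℝ) × (Fin s → ℝ))) : Prop :=
  (∀ p ∈ Δ, p.1 ∈ Set.Icc (0 : Fin s → ℝ) 1 ∧ p.2 ∈ Set.Icc (0 : Fin s → ℝ) 1 ∧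
    p.1 ≤ p.2 ∧ (∏ i, p.2 i) - (∏ i, p.1 i) ≤ δ) ∧
  ∀ y ∈ Set.Icc (0 : Fin s → ℝ) 1, ∃ p ∈ Δ, p.1 ≤ y ∧ y ≤ p.2

lemma exists_lt_and_succ_le_and_le {α : Type*} [LinearOrder α] (a : ℕ → α) {y : α} {J : ℕ}
    (hJ : J ≠ 0) (hJy : a J ≤ y) (hy : y ≤ a 0) : ∃ j < J, a (j + 1) ≤ y ∧ y ≤ a j := by
  induction J with
  | zero => contradiction
  | succ J ih =>
    by_cases hyJ : y ≤ a J
    · exact ⟨J, J.lt_succ_self, hJy, hyJ⟩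
    · have hJ0 : J ≠ 0 := by
        rintro rfl
        exact hyJ hy
      obtain ⟨j, hj, hbracket⟩ := ih hJ0 (not_le.mp hyJ).le
      exact ⟨j, hj.trans J.lt_succ_self, hbracket⟩

section RiemannSum

variable {K : Type*} [Field K] [LinearOrder K] [IsStrictOrderedRing K]

lemma pow_div_factorial_le_sub (n : ℕ) {x : K} (hx : 0 ≤ x) :
    x ^ n / n.factorial ≤
      (x + 1) ^ (n + 1) / (n + 1).factorial - x ^ (n + 1) / (n + 1).factorial := by
  have hbernoulli : x ^ (n + 1) + (n + 1) * x ^ n ≤ (x + 1) ^ (n + 1) := by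
    simpa using pow_add_mul_le_add_pow (b := 1) hx (by positivity) (n + 1)
  calc x ^ n / n.factorial
      = (n + 1) * x ^ n / (n + 1).factorial := by
        rw [Nat.factorial_succ]
        push_cast
        field_simp
    _ ≤ ((x + 1) ^ (n + 1) - x ^ (n + 1)) / (n + 1).factorial := by
        gcongr
        exact le_sub_iff_add_le'.mpr hbernoulli
    _ = _ := sub_div ..

lemma sum_sub_pow_div_factorial_le (n : ℕ) {v : K} {J : ℕ} (hJ : J ≤ v) :
    ∑ j ∈ Finset.range J, (v - (j + 1 : ℕ)) ^ n / n.factorial ≤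
      v ^ (n + 1) / (n + 1).factorial := by
  set F : ℕ → K := fun j ↦ (v - j) ^ (n + 1) / (n + 1).factorial
  have hterm : ∀ j ∈ Finset.range J, (v - (j + 1 : ℕ)) ^ n / n.factorial ≤ F j - F (j + 1) := by
    intro j hj
    have hjv : ((j + 1 : ℕ) : K) ≤ v := (Nat.cast_le.mpr (Finset.mem_range.mp hj)).trans hJ
    have hshift : v - (j + 1 : ℕ) + 1 = v - j := by push_cast; ring
    simpa only [F, hshift] using pow_div_factorial_le_sub n (sub_nonneg.mpr hjv)
  have hlast : 0 ≤ F J := div_nonneg (pow_nonneg (sub_nonneg.mpr hJ) _) (Nat.cast_nonneg _)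
  calc ∑ j ∈ Finset.range J, (v - (j + 1 : ℕ)) ^ n / n.factorial
      ≤ ∑ j ∈ Finset.range J, (F j - F (j + 1)) := Finset.sum_le_sum hterm
    _ = F 0 - F J := Finset.sum_range_sub' F J
    _ ≤ F 0 := sub_le_self _ hlast
    _ = v ^ (n + 1) / (n + 1).factorial := by simp only [F, Nat.cast_zero, sub_zero]

end RiemannSum

section SlabLift

variable {n : ℕ}

open scoped Classical in
/-- The pairs of points of the slab `[b, a] × [0,1]^n` obtained from the pairs `(x, z) ∈ Δ` by
prepending the first coordinate `b` to `x` and `a` to `z`. -/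
noncomputable def slabLift (b a : ℝ) (Δ : Finset ((Fin n → ℝ) × (Fin n → ℝ))) :
    Finset ((Fin (n + 1) → ℝ) × (Fin (n + 1) → ℝ)) :=
  Δ.image fun p ↦ (Fin.cons b p.1, Fin.cons a p.2)

lemma mem_slabLift {b a : ℝ} {Δ : Finset ((Fin n → ℝ) × (Fin n → ℝ))}
    {q : (Fin (n + 1) → ℝ) × (Fin (n + 1) → ℝ)} :
    q ∈ slabLift b a Δ ↔ ∃ p ∈ Δ, (Fin.cons b p.1, Fin.cons a p.2) = q := by
  simp only [slabLift, Finset.mem_image]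

lemma card_slabLift_le (b a : ℝ) (Δ : Finset ((Fin n → ℝ) × (Fin n → ℝ))) :
    (slabLift b a Δ).card ≤ Δ.card :=
  Finset.card_image_le

lemma cons_mem_Icc {α : Type*} [Preorder α] {a : α} {x : Fin n → α} {l u : Fin (n + 1) → α}
    (ha : a ∈ Set.Icc (l 0) (u 0)) (hx : x ∈ Set.Icc (Fin.tail l) (Fin.tail u)) :
    (Fin.cons a x : Fin (n + 1) → α) ∈ Set.Icc l u :=
  ⟨Fin.le_cons.mpr ⟨ha.1, hx.1⟩, Fin.cons_le.mpr ⟨ha.2, hx.2⟩⟩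

lemma prod_cons_sub_prod_cons_le {R : Type*} [CommRing R] [PartialOrder R] [IsOrderedRing R]
    {a b η : R} {x z : Fin n → R} (ha : 0 ≤ a) (hba : b ≤ a) (hx : x ∈ Set.Icc 0 1)
    (hxz : ∏ i, z i - ∏ i, x i ≤ η) :
    ∏ i, (Fin.cons a z : Fin (n + 1) → R) i - ∏ i, (Fin.cons b x : Fin (n + 1) → R) i ≤
      a * η + (a - b) := by
  have hx_le_one : ∏ i, x i ≤ 1 := Finset.prod_le_one (fun i _ ↦ hx.1 i) fun i _ ↦ hx.2 i
  calc ∏ i, (Fin.cons a z : Fin (n + 1) → R) i - ∏ i, (Fin.cons b x : Fin (n + 1) → R) i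
      = a * (∏ i, z i - ∏ i, x i) + (a - b) * ∏ i, x i := by
        rw [Fin.prod_cons, Fin.prod_cons]
        ring
    _ ≤ a * η + (a - b) := by
        gcongr
        exact mul_le_of_le_one_right (sub_nonneg.mpr hba) hx_le_one

lemma IsDeltaBracketingCover.biUnion_slabLift [DecidableEq ((Fin (n + 1) → ℝ) × (Fin (n + 1) → ℝ))]
    {a η : ℕ → ℝ} {J : ℕ} {δ : ℝ} {D : ℕ → Finset ((Fin n → ℝ) × (Fin n → ℝ))} (ha : Antitone a)
    (ha0 : a 0 = 1) (haJ : a J = 0) (hD : ∀ j < J, IsDeltaBracketingCover n (η j) (D j))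
    (hweight : ∀ j < J, a j * η j + (a j - a (j + 1)) ≤ δ) :
    IsDeltaBracketingCover (n + 1) δ
      ((Finset.range J).biUnion fun j ↦ slabLift (a (j + 1)) (a j) (D j)) := by
  have ha_mem : ∀ j ≤ J, a j ∈ Set.Icc 0 1 := fun j hj ↦
    ⟨haJ ▸ ha hj, ha0 ▸ ha j.zero_le⟩
  refine ⟨fun q hq ↦ ?_, fun y ⟨hy0, hy1⟩ ↦ ?_⟩
  · obtain ⟨j, hj, hq⟩ := Finset.mem_biUnion.mp hq
    obtain ⟨⟨x, z⟩, hp, rfl⟩ := mem_slabLift.mp hq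
    have hj : j < J := Finset.mem_range.mp hj
    obtain ⟨hx, hz, hxz, hη⟩ := (hD j hj).1 _ hp
    have hstep : a (j + 1) ≤ a j := ha j.le_succ
    exact ⟨cons_mem_Icc (ha_mem _ hj) hx, cons_mem_Icc (ha_mem _ hj.le) hz,
      (Fin.cons_le_cons (α := fun _ ↦ ℝ)).mpr ⟨hstep, hxz⟩,
      (prod_cons_sub_prod_cons_le (ha_mem _ hj.le).1 hstep hx hη).trans (hweight j hj)⟩
  · have hJ : J ≠ 0 := by
      rintro rfl
      exact one_ne_zero (ha0.symm.trans haJ)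
    obtain ⟨j, hj, hlo, hhi⟩ : ∃ j < J, a (j + 1) ≤ y 0 ∧ y 0 ≤ a j :=
      exists_lt_and_succ_le_and_le a hJ (haJ ▸ hy0 0) (ha0 ▸ hy1 0)
    obtain ⟨p, hp, hpy, hyp⟩ := (hD j hj).2 (Fin.tail y) ⟨fun i ↦ hy0 i.succ, fun i ↦ hy1 i.succ⟩
    exact ⟨_, Finset.mem_biUnion.mpr ⟨j, Finset.mem_range.mpr hj, mem_slabLift.mpr ⟨p, hp, rfl⟩⟩,
      (Fin.cons_le (α := fun _ ↦ ℝ)).mpr ⟨hlo, hpy⟩,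
      (Fin.le_cons (α := fun _ ↦ ℝ)).mpr ⟨hhi, hyp⟩⟩

end SlabLift

section SlabEndpoint

/-- The cut points `1, 1 - 1 / u, 1 - 2 / u, …` of `[0,1]`, in steps of `1 / u` and stopped at
`0`, between which the first coordinate is divided into slabs. -/
noncomputable def slabEndpoint (u : ℝ) (j : ℕ) : ℝ :=
  max (u - j) 0 / u

variable {u : ℝ}

lemma slabEndpoint_zero (hu : 0 < u) : slabEndpoint u 0 = 1 := by
  rw [slabEndpoint, Nat.cast_zero, sub_zero, max_eq_left hu.le, div_self hu.ne']

lemma slabEndpoint_eq_zero {j : ℕ} (hj : u ≤ j) : slabEndpoint u j = 0 := by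
  rw [slabEndpoint, max_eq_right (sub_nonpos.mpr hj), zero_div]

lemma slabEndpoint_of_le {j : ℕ} (hj : j ≤ u) : slabEndpoint u j = (u - j) / u := by
  rw [slabEndpoint, max_eq_left (sub_nonneg.mpr hj)]

lemma antitone_slabEndpoint (hu : 0 ≤ u) : Antitone (slabEndpoint u) := by
  intro i j hij
  unfold slabEndpoint
  gcongr

lemma slabEndpoint_sub_succ_le (hu : 0 ≤ u) (j : ℕ) :
    slabEndpoint u j - slabEndpoint u (j + 1) ≤ 1 / u := by
  have hmax : max (u - j) 0 - max (u - (j + 1 : ℕ)) 0 ≤ 1 := by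
    push_cast
    grind
  rw [slabEndpoint, slabEndpoint, ← sub_div]
  gcongr

end SlabEndpoint

lemma isDeltaBracketingCover_zero {δ : ℝ} (hδ : 0 ≤ δ) :
    IsDeltaBracketingCover 0 δ {(0, 0)} := by
  refine ⟨fun p hp ↦ ?_, fun y _ ↦ ⟨_, Finset.mem_singleton_self _, ?_, ?_⟩⟩
  · obtain rfl := Finset.mem_singleton.mp hp
    simpa using hδ
  · exact fun i ↦ i.elim0
  · exact fun i ↦ i.elim0

theorem exists_isDeltaBracketingCover_div_card_le (n : ℕ) {u : ℝ} (hu : 0 < u) :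
    ∃ Δ : Finset ((Fin n → ℝ) × (Fin n → ℝ)), IsDeltaBracketingCover n (n / u) Δ ∧
      (Δ.card : ℝ) ≤ (u + n) ^ n / n.factorial := by
  classical
  induction n generalizing u with
  | zero => exact ⟨_, isDeltaBracketingCover_zero (by simp), by simp⟩
  | succ n ih =>
    choose! D hD hcard using fun j (hj : j < ⌈u⌉₊) ↦ ih (sub_pos.mpr (Nat.lt_ceil.mp hj))
    refine ⟨_, .biUnion_slabLift (antitone_slabEndpoint hu.le) (slabEndpoint_zero hu)
      (slabEndpoint_eq_zero (Nat.le_ceil u)) hD fun j hj ↦ ?_, ?_⟩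
    · have hju : 0 < u - j := sub_pos.mpr (Nat.lt_ceil.mp hj)
      have hscale : slabEndpoint u j * (n / (u - j)) = n / u := by
        rw [slabEndpoint_of_le (sub_pos.mp hju).le]
        field_simp
      calc slabEndpoint u j * (n / (u - j)) + (slabEndpoint u j - slabEndpoint u (j + 1))
          ≤ n / u + 1 / u := add_le_add hscale.le (slabEndpoint_sub_succ_le hu.le j)
        _ = (n + 1 : ℕ) / u := by rw [← add_div, Nat.cast_succ]
    · have hceil : (⌈u⌉₊ : ℝ) ≤ u + (n + 1 : ℕ) := by
        push_cast
        linarith [Nat.ceil_lt_add_one hu.le, n.cast_nonneg (α := ℝ)]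
      calc _ ≤ ((∑ j ∈ Finset.range ⌈u⌉₊, (D j).card : ℕ) : ℝ) :=
            Nat.cast_le.mpr <| Finset.card_biUnion_le.trans <|
              Finset.sum_le_sum fun j _ ↦ card_slabLift_le _ _ _
        _ ≤ ∑ j ∈ Finset.range ⌈u⌉₊, (u + (n + 1 : ℕ) - (j + 1 : ℕ)) ^ n / n.factorial := by
            rw [Nat.cast_sum]
            refine Finset.sum_le_sum fun j hj ↦ (hcard j (Finset.mem_range.mp hj)).trans_eq ?_
            push_cast
            ring
        _ ≤ _ := sum_sub_pow_div_factorial_le n hceil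

theorem stmt_5_general (s : ℕ) {δ : ℝ} (hδ : 0 < δ) :
    ∃ Δ : Finset ((Fin s → ℝ) × (Fin s → ℝ)), IsDeltaBracketingCover s δ Δ ∧
      (Δ.card : ℝ) ≤ Real.exp 1 ^ s * (δ⁻¹ + 1) ^ s := by
  obtain rfl | hs := s.eq_zero_or_pos
  · exact ⟨_, isDeltaBracketingCover_zero hδ.le, by simp⟩
  have hs' : (0 : ℝ) < s := Nat.cast_pos.mpr hs
  obtain ⟨Δ, hΔ, hcard⟩ := exists_isDeltaBracketingCover_div_card_le s (div_pos hs' hδ)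
  rw [div_div_cancel₀ hs'.ne'] at hΔ
  have hexp : (s : ℝ) ^ s / s.factorial ≤ Real.exp 1 ^ s := by
    simpa only [← Real.exp_one_pow] using Real.pow_div_factorial_le_exp s hs'.le s
  refine ⟨Δ, hΔ, hcard.trans ?_⟩
  calc ((s : ℝ) / δ + s) ^ s / s.factorial
      = (s : ℝ) ^ s / s.factorial * (δ⁻¹ + 1) ^ s := by
        rw [div_eq_mul_inv (s : ℝ) δ, ← mul_add_one, mul_pow, mul_div_right_comm]
    _ ≤ Real.exp 1 ^ s * (δ⁻¹ + 1) ^ s := by gcongr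

theorem stmt_5 (s : ℕ) (hs : 1 ≤ s) (δ : ℝ) (hδ : δ ∈ Set.Ioc (0:ℝ) 1) :
    ∃ Δ : Finset ((Fin s → ℝ) × (Fin s → ℝ)), IsDeltaBracketingCover s δ Δ ∧
      (Δ.card : ℝ) ≤ 2 ^ (s - 1) * Real.exp 1 ^ s * (δ⁻¹ + 1) ^ s := by
  obtain ⟨Δ, hΔ, hcard⟩ := stmt_5_general s hδ.1
  refine ⟨Δ, hΔ, hcard.trans ?_⟩
  have hδ0 := hδ.1
  gcongr
  exact le_mul_of_one_le_left (by positivity) (one_le_pow₀ one_le_two)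
end

section
/- For every dimension s ≥ 1 and every integer K ≥ 1 there exist finite families A_0, A_1, …, A_K of Lebesgue-measurable subsets of [0,1]^s with the following properties: (i) |A_k| ≤ (2e)^s · (2^{k+1} + 1)^s for every 0 ≤ k ≤ K; (ii) every set I ∈ A_k satisfies λ(I) ≤ 2^{−k}; (iii) for every x ∈ [0,1]^s there exist sets I_k ∈ A_k (0 ≤ k ≤ K), pairwise disjoint, such that ⋃_{k=0}^{K−1} I_k ⊆ [0,x] ⊆ ⋃_{k=0}^{K} I_k (equivalently, for every y ∈ [0,1]^s one has ∑_{k=0}^{K−1} 1_{I_k}(y) ≤ 1_{[0,x]}(y) ≤ ∑_{k=0}^{K} 1_{I_k}(y)). -/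
open MeasureTheory Real

/-!
*Bracketing.* Work at scale `δ = 2⁻¹ ^ M` and write `x = 2 ^ (-u)` coordinatewise. Boxes `[0, x]` of
volume between `2⁻¹ ^ (j + 1)` and `2⁻¹ ^ j`, `j ≤ M`, are bracketed up to `δ` by boxes whose
corners have volume ratio at most `1 + 2⁻¹ ^ (M - j)`; a grid of mesh `1 / (s * 2 ^ (M - j))` in `u`
provides these, and only its nodes in a simplex of size `s * 2 ^ (M - j) * (j + 1)` matter. Boxes of
volume below `δ / 2` are first enlarged to volume `δ / 2`; the upper bracket found then has volume
at most `δ`, so that `∅` serves as the lower one. Binomial bounds and Stirling's lower bound for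
`s!` keep the total number of nodes below `(2e) ^ s * (2 ^ M + 1) ^ s`.

*Chaining.* Bracket `[0, x]` at scale `2⁻¹ ^ K` between `L_K` and `U`, then bracket `L_K` at scale
`2⁻¹ ^ (K - 1)` with lower end `L_(K - 1)`, and so on down to `L_0 = ∅`. The sets
`I_k = L_(k + 1) \ L_k`, `k < K`, and `I_K = U \ L_K` partition `L_K` and `U` respectively. Since
`L_k` is a function of `L_(k + 1)`, there are no more sets `I_k` than brackets at scale
`2⁻¹ ^ (k + 1)`.
-/

open Set Finset

/-! ### Bracketing covers and chaining -/

section Chaining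

variable {α : Type*}

/-- A finite bracketing cover, at level `δ`, of a class `𝓒` of subsets of a measure space: pairs
`(L, U)` of members of `𝓒` with `L ⊆ U` and `μ (U \ L) ≤ δ` such that every member of `𝓒` lies
between the two sets of some pair. -/
structure IsBracketingCover [MeasurableSpace α] (μ : Measure α) (𝓒 : Set (Set α)) (δ : ENNReal)
    (B : Finset (Set α × Set α)) : Prop where
  lower_mem : ∀ b ∈ B, b.1 ∈ 𝓒
  upper_mem : ∀ b ∈ B, b.2 ∈ 𝓒
  lower_subset_upper : ∀ b ∈ B, b.1 ⊆ b.2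
  measure_diff_le : ∀ b ∈ B, μ (b.2 \ b.1) ≤ δ
  exists_mem : ∀ C ∈ 𝓒, ∃ b ∈ B, b.1 ⊆ C ∧ C ⊆ b.2

/-- A decomposition of `C` into `N` pairwise disjoint layers, the `k`-th one taken from `A k`. The
values `I k` with `N ≤ k` are irrelevant. -/
structure IsLayering (A : ℕ → Finset (Set α)) (N : ℕ) (C : Set α) (I : ℕ → Set α) : Prop where
  mem : ∀ k < N, I k ∈ A k
  disjoint : ∀ k < N, ∀ l < N, k ≠ l → Disjoint (I k) (I l)
  biUnion_eq : ⋃ k ∈ range N, I k = C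

/-- Small upper sets are paired with `∅`, because the given lower set need not be below the set to
be covered; pairs with a large gap are discarded. -/
lemma exists_isBracketingCover_card_le [MeasurableSpace α] {μ : Measure α} {𝓒 : Set (Set α)}
    {δ : ENNReal} {T : Finset (Set α × Set α)} (hempty : ∅ ∈ 𝓒)
    (hT : ∀ b ∈ T, b.1 ∈ 𝓒 ∧ b.2 ∈ 𝓒 ∧ b.1 ⊆ b.2)
    (hcov : ∀ C ∈ 𝓒, ∃ b ∈ T, C ⊆ b.2 ∧ (μ b.2 ≤ δ ∨ b.1 ⊆ C ∧ μ (b.2 \ b.1) ≤ δ)) :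
    ∃ B, #B ≤ #T ∧ IsBracketingCover μ 𝓒 δ B ∧ ∀ b ∈ B, μ b.2 ≤ δ → b.1 = ∅ := by
  classical
  let trunc (b : Set α × Set α) : Set α × Set α := (if μ b.2 ≤ δ then ∅ else b.1, b.2)
  have trunc_small {b : Set α × Set α} (h : μ b.2 ≤ δ) : trunc b = (∅, b.2) := by
    simp only [trunc, if_pos h]
  have trunc_large {b : Set α × Set α} (h : ¬μ b.2 ≤ δ) : trunc b = b := by
    simp only [trunc, if_neg h]
  have htrunc : ∀ b ∈ T.image trunc, b.1 ∈ 𝓒 ∧ b.2 ∈ 𝓒 ∧ b.1 ⊆ b.2 := by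
    refine Finset.forall_mem_image.2 fun b hb => ?_
    by_cases h : μ b.2 ≤ δ
    · rw [trunc_small h]
      exact ⟨hempty, (hT b hb).2.1, empty_subset _⟩
    · rw [trunc_large h]
      exact hT b hb
  refine ⟨{b ∈ T.image trunc | μ (b.2 \ b.1) ≤ δ},
    (card_filter_le _ _).trans card_image_le, ⟨?_, ?_, ?_, ?_, ?_⟩, ?_⟩
  · exact fun b hb => (htrunc b (filter_subset _ _ hb)).1
  · exact fun b hb => (htrunc b (filter_subset _ _ hb)).2.1
  · exact fun b hb => (htrunc b (filter_subset _ _ hb)).2.2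
  · exact fun b hb => (mem_filter.1 hb).2
  · intro C hC
    obtain ⟨b, hb, hCb, hsmall⟩ := hcov C hC
    refine ⟨trunc b, mem_filter.2 ⟨mem_image_of_mem _ hb, ?_⟩, ?_⟩
    · by_cases h : μ b.2 ≤ δ
      · simpa only [trunc_small h, Set.sdiff_empty] using h
      · simpa only [trunc_large h] using (hsmall.resolve_left h).2
    · by_cases h : μ b.2 ≤ δ
      · simpa only [trunc_small h] using ⟨empty_subset C, hCb⟩
      · simpa only [trunc_large h] using ⟨(hsmall.resolve_left h).1, hCb⟩
  · intro b hb
    obtain ⟨b, -, rfl⟩ := mem_image.1 (mem_filter.1 hb).1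
    exact fun h : μ b.2 ≤ δ => congrArg Prod.fst (trunc_small h)

section Update

variable {A : ℕ → Finset (Set α)} {N : ℕ} {C : Set α} {I : ℕ → Set α}

lemma IsLayering.update (h : IsLayering A N C I) (E : Finset (Set α)) (J : Set α) :
    IsLayering (Function.update A N E) N C (Function.update I N J) := by
  have hI : ∀ k < N, Function.update I N J k = I k := fun k hk =>
    Function.update_of_ne hk.ne _ _
  refine ⟨fun k hk => ?_, fun k hk l hl hkl => ?_, ?_⟩
  · rw [hI k hk, Function.update_of_ne hk.ne]
    exact h.mem k hk
  · rw [hI k hk, hI l hl]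
    exact h.disjoint k hk l hl hkl
  · rw [← h.biUnion_eq]
    exact iUnion₂_congr fun k hk => hI k (mem_range.1 hk)

lemma IsLayering.update_succ (h : IsLayering A N C I) {E : Finset (Set α)} {J : Set α}
    (hJ : J ∈ E) (hCJ : Disjoint C J) :
    IsLayering (Function.update A N E) (N + 1) (C ∪ J) (Function.update I N J) := by
  have hlow := h.update E J
  have hlast : ∀ k < N, Disjoint (Function.update I N J k) (Function.update I N J N) := by
    intro k hk
    rw [Function.update_self]
    refine hCJ.mono_left ?_
    rw [← hlow.biUnion_eq]
    exact subset_biUnion_of_mem (u := Function.update I N J) (mem_range.2 hk)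
  refine ⟨fun k hk => ?_, fun k hk l hl hkl => ?_, ?_⟩
  · rcases Nat.lt_succ_iff_lt_or_eq.1 hk with hk | rfl
    · exact hlow.mem k hk
    · simpa only [Function.update_self] using hJ
  · rcases Nat.lt_succ_iff_lt_or_eq.1 hk with hk | rfl <;>
      rcases Nat.lt_succ_iff_lt_or_eq.1 hl with hl | rfl
    · exact hlow.disjoint k hk l hl hkl
    · exact hlast k hk
    · exact (hlast l hl).symm
    · exact absurd rfl hkl
  · rw [range_add_one, set_biUnion_insert, hlow.biUnion_eq, Function.update_self, union_comm]

end Update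

open scoped Classical in
lemma exists_isLayering_of_telescope {𝓛 : ℕ → Finset (Set α)} {φ : ℕ → Set α → Set α}
    (h₀ : ∀ L ∈ 𝓛 0, L = ∅) (hφ : ∀ k, ∀ L ∈ 𝓛 (k + 1), φ k L ∈ 𝓛 k ∧ φ k L ⊆ L)
    {N : ℕ} {L : Set α} (hL : L ∈ 𝓛 N) :
    ∃ I, IsLayering (fun k => (𝓛 (k + 1)).image fun L => L \ φ k L) N L I := by
  induction N generalizing L with
  | zero => exact ⟨fun _ => ∅, by simp, by simp, by simp [h₀ L hL]⟩
  | succ N ih =>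
    obtain ⟨hmem, hsub⟩ := hφ N L hL
    obtain ⟨I, hI⟩ := ih hmem
    have h := hI.update_succ (mem_image_of_mem (fun L => L \ φ N L) hL) disjoint_sdiff_right
    rw [Function.update_eq_self_iff.2 rfl, Set.union_sdiff_cancel hsub] at h
    exact ⟨_, h⟩

theorem exists_isLayering_of_isBracketingCover [MeasurableSpace α] {μ : Measure α}
    {𝓒 : Set (Set α)} {δ : ℕ → ENNReal} {B : ℕ → Finset (Set α × Set α)}
    (hB : ∀ k, IsBracketingCover μ 𝓒 (δ k) (B k)) (h₀ : ∀ b ∈ B 0, b.1 = ∅) (K : ℕ) :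
    ∃ A : ℕ → Finset (Set α),
      (∀ k < K, #(A k) ≤ #(B (k + 1))) ∧ #(A K) ≤ #(B K) ∧
      (∀ k ≤ K, ∀ I ∈ A k, ∃ C ∈ 𝓒, ∃ D ∈ 𝓒, I = C \ D ∧ μ I ≤ δ k) ∧
      ∀ C ∈ 𝓒, ∃ L U I, L ⊆ C ∧ C ⊆ U ∧ IsLayering A K L I ∧ IsLayering A (K + 1) U I := by
  classical
  choose! br hbr hlo hup using fun k => (hB k).exists_mem
  let 𝓛 (k : ℕ) : Finset (Set α) := (B k).image Prod.fst
  have h𝓛 {k : ℕ} {L : Set α} (hL : L ∈ 𝓛 k) : L ∈ 𝓒 :=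
    Finset.forall_mem_image.2 (fun b hb => (hB k).lower_mem b hb) L hL
  let inner (k : ℕ) : Finset (Set α) := (𝓛 (k + 1)).image fun L => L \ (br k L).1
  let outer : Finset (Set α) := (B K).image fun b => b.2 \ b.1
  refine ⟨Function.update inner K outer, fun k hk => ?_, ?_, fun k hk I hI => ?_, fun C hC => ?_⟩
  · rw [Function.update_of_ne hk.ne]
    exact card_image_le.trans card_image_le
  · rw [Function.update_self]
    exact card_image_le
  · rcases eq_or_ne k K with rfl | hne
    · rw [Function.update_self] at hI
      obtain ⟨b, hb, rfl⟩ := mem_image.1 hI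
      exact ⟨b.2, (hB k).upper_mem b hb, b.1, (hB k).lower_mem b hb, rfl,
        (hB k).measure_diff_le b hb⟩
    · rw [Function.update_of_ne hne] at hI
      obtain ⟨L, hL, rfl⟩ := mem_image.1 hI
      have hb := hbr k L (h𝓛 hL)
      exact ⟨L, h𝓛 hL, _, (hB k).lower_mem _ hb, rfl,
        (measure_mono (Set.sdiff_subset_sdiff_left (hup k L (h𝓛 hL)))).trans
          ((hB k).measure_diff_le _ hb)⟩
  · have hb := hbr K C hC
    obtain ⟨I, hI⟩ := exists_isLayering_of_telescope (φ := fun k L => (br k L).1)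
      (Finset.forall_mem_image.2 fun b hb => h₀ b hb)
      (fun k L hL => ⟨mem_image_of_mem _ (hbr k L (h𝓛 hL)), hlo k L (h𝓛 hL)⟩)
      (mem_image_of_mem Prod.fst hb)
    have hupper :=
      hI.update_succ (mem_image_of_mem (fun b => b.2 \ b.1) hb) disjoint_sdiff_right
    rw [Set.union_sdiff_cancel ((hB K).lower_subset_upper _ hb)] at hupper
    exact ⟨_, _, _, hlo K C hC, hup K C hC, hI.update _ _, hupper⟩

end Chaining

/-! ### Counting lattice points -/

section Counting

open scoped Nat

/-- The lattice points of the simplex `{x ≥ 0 | ∑ c, x c ≤ N}`. -/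
def latticeSimplex (ι : Type*) [Fintype ι] [DecidableEq ι] (N : ℕ) : Finset (ι → ℕ) :=
  {n ∈ Fintype.piFinset fun _ => range (N + 1) | ∑ c, n c ≤ N}

variable {ι : Type*} [Fintype ι] [DecidableEq ι]

lemma mem_latticeSimplex {N : ℕ} {n : ι → ℕ} : n ∈ latticeSimplex ι N ↔ ∑ c, n c ≤ N := by
  simp only [latticeSimplex, Finset.mem_filter, Fintype.mem_piFinset, Finset.mem_range,
    Nat.lt_succ_iff, and_iff_right_iff_imp]
  exact fun h c => (single_le_sum (fun _ _ => Nat.zero_le _) (Finset.mem_univ c)).trans h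

lemma card_latticeSimplex_le (N : ℕ) :
    #(latticeSimplex ι N) ≤ (N + Fintype.card ι).choose (Fintype.card ι) := by
  -- A slack coordinate turns the inequality `∑ n ≤ N` into an equality.
  let slack (n : ι → ℕ) : Option ι →₀ ℕ :=
    Finsupp.equivFunOnFinite.symm fun o => o.elim (N - ∑ c, n c) n
  have hmaps : ∀ n ∈ latticeSimplex ι N, slack n ∈ finsuppAntidiag univ N := by
    intro n hn
    have hle := mem_latticeSimplex.1 hn
    simp [slack, mem_finsuppAntidiag, Fintype.sum_option, Nat.sub_add_cancel hle]
  have hinj : InjOn slack (latticeSimplex ι N) := fun n _ m _ h =>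
    funext fun c => by simpa [slack] using DFunLike.congr_fun h (some c)
  calc #(latticeSimplex ι N) ≤ #(finsuppAntidiag (univ : Finset (Option ι)) N) :=
        card_le_card_of_injOn slack hmaps hinj
    _ = (N + Fintype.card ι).choose (Fintype.card ι) := by
        rw [card_finsuppAntidiag_nat_eq_choose, Finset.card_univ, Fintype.card_option,
          show Fintype.card ι + 1 + N - 1 = N + Fintype.card ι by lia, Nat.choose_symm_add]

lemma four_mul_pow_self_div_factorial_le {s : ℕ} (hs : 1 ≤ s) :
    4 * ((s : ℝ) ^ s / s !) ≤ (2 * exp 1) ^ s := by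
  have hs' : (1 : ℝ) ≤ s := by exact_mod_cast hs
  have hsqrt : 2 ≤ √(2 * π * s) := by
    rw [le_sqrt' two_pos]
    nlinarith [pi_gt_three]
  have hstirling : 2 * ((s : ℝ) ^ s / exp 1 ^ s) ≤ s ! := by
    rw [← div_pow]
    exact (by gcongr : _ ≤ _).trans (Stirling.le_factorial_stirling s)
  have hhalf : 2 * ((s : ℝ) ^ s / s !) ≤ exp 1 ^ s := by
    rw [← mul_div_assoc, div_le_iff₀ (by positivity)] at hstirling ⊢
    linarith
  calc 4 * ((s : ℝ) ^ s / s !) = 2 ^ 1 * (2 * ((s : ℝ) ^ s / s !)) := by ring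
    _ ≤ 2 ^ s * exp 1 ^ s := by gcongr; norm_num
    _ = (2 * exp 1) ^ s := (mul_pow _ _ _).symm

lemma sum_two_pow_sub_mul_succ_add_one (M : ℕ) :
    ∑ j ∈ range (M + 1), (2 ^ (M - j) * (j + 1) + 1) + 2 = 4 * 2 ^ M := by
  induction M with
  | zero => simp
  | succ M ih =>
    have hterm : ∀ j ∈ range (M + 1), 2 ^ (M + 1 - j) * (j + 1) + 1 + 1
        = 2 * (2 ^ (M - j) * (j + 1) + 1) := by
      intro j hj
      rw [Nat.succ_sub (mem_range_succ_iff.1 hj), pow_succ]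
      ring
    have hsum := Finset.sum_congr rfl hterm
    rw [← mul_sum, sum_add_distrib (g := fun _ => 1), sum_const, card_range] at hsum
    rw [sum_range_succ, Nat.sub_self, pow_succ]
    lia

lemma two_pow_sub_mul_succ_le {M j : ℕ} (hj : j ≤ M) : 2 ^ (M - j) * (j + 1) ≤ 2 ^ M :=
  calc 2 ^ (M - j) * (j + 1) ≤ 2 ^ (M - j) * 2 ^ j := by gcongr; exact Nat.lt_two_pow_self
    _ = 2 ^ M := by rw [← pow_add, Nat.sub_add_cancel hj]

lemma choose_mul_add_self_le (s m : ℕ) :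
    ((s * m + s).choose s : ℝ) ≤ (s : ℝ) ^ s / s ! * (m + 1 : ℕ) ^ s := by
  refine (Nat.choose_le_pow_div s _).trans_eq ?_
  push_cast
  rw [← mul_add_one, mul_pow]
  ring

lemma sum_choose_le {s : ℕ} (hs : 1 ≤ s) (M : ℕ) :
    ∑ j ∈ range (M + 1), ((s * (2 ^ (M - j) * (j + 1)) + s).choose s : ℝ)
      ≤ (2 * exp 1) ^ s * (2 ^ M + 1) ^ s := by
  let w (j : ℕ) : ℕ := 2 ^ (M - j) * (j + 1) + 1
  have hw : ∀ j ∈ range (M + 1), w j ^ s ≤ (2 ^ M + 1) ^ (s - 1) * w j := by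
    intro j hj
    rw [← pow_sub_one_mul (by lia : s ≠ 0) (w j)]
    gcongr
    exact Nat.succ_le_succ (two_pow_sub_mul_succ_le (mem_range_succ_iff.1 hj))
  have hsum : ∑ j ∈ range (M + 1), w j ^ s ≤ 4 * (2 ^ M + 1) ^ s :=
    calc ∑ j ∈ range (M + 1), w j ^ s ≤ (2 ^ M + 1) ^ (s - 1) * ∑ j ∈ range (M + 1), w j := by
          rw [mul_sum]
          exact sum_le_sum hw
      _ ≤ (2 ^ M + 1) ^ (s - 1) * (4 * (2 ^ M + 1)) := by
          gcongr
          have : ∑ j ∈ range (M + 1), w j + 2 = 4 * 2 ^ M := sum_two_pow_sub_mul_succ_add_one M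
          lia
      _ = 4 * (2 ^ M + 1) ^ s := by
          rw [← pow_sub_one_mul (by lia : s ≠ 0) (2 ^ M + 1)]
          ring
  calc ∑ j ∈ range (M + 1), ((s * (2 ^ (M - j) * (j + 1)) + s).choose s : ℝ)
      ≤ ∑ j ∈ range (M + 1), (s : ℝ) ^ s / s ! * (w j : ℝ) ^ s :=
        sum_le_sum fun j _ => choose_mul_add_self_le s _
    _ = (s : ℝ) ^ s / s ! * (∑ j ∈ range (M + 1), w j ^ s : ℕ) := by
        push_cast
        rw [mul_sum]
    _ ≤ (s : ℝ) ^ s / s ! * (4 * (2 ^ M + 1) ^ s : ℕ) := by gcongr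
    _ = 4 * ((s : ℝ) ^ s / s !) * (2 ^ M + 1) ^ s := by push_cast; ring
    _ ≤ (2 * exp 1) ^ s * (2 ^ M + 1) ^ s := by
        gcongr
        exact four_mul_pow_self_div_factorial_le hs

end Counting

/-! ### The logarithmic grid -/

section LogGrid

variable {ι : Type*}

/-- The node with index `n` of the grid in `(0, 1] ^ ι` that is equidistant with mesh `h` in the
variable `-logb 2 x`. A larger index means a smaller node. -/
noncomputable def logGrid (h : ℝ) (n : ι → ℕ) : ι → ℝ := fun c => 2 ^ (-(h * n c))

lemma logGrid_pos (h : ℝ) (n : ι → ℕ) (c : ι) : 0 < logGrid h n c :=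
  rpow_pos_of_pos two_pos _

lemma logGrid_le_one {h : ℝ} (hh : 0 ≤ h) (n : ι → ℕ) : logGrid h n ≤ 1 := fun c =>
  rpow_le_one_of_one_le_of_nonpos one_le_two (neg_nonpos.2 (by positivity))

lemma logGrid_eq_mul_logGrid_add_one (h : ℝ) (n : ι → ℕ) (c : ι) :
    logGrid h n c = 2 ^ h * logGrid h (n + 1) c := by
  unfold logGrid
  rw [← rpow_add two_pos]
  congr 1
  push_cast [Pi.add_apply, Pi.one_apply]
  ring

lemma logGrid_add_one_le {h : ℝ} (hh : 0 ≤ h) (n : ι → ℕ) : logGrid h (n + 1) ≤ logGrid h n := by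
  intro c
  rw [logGrid_eq_mul_logGrid_add_one h n c]
  exact le_mul_of_one_le_left (logGrid_pos _ _ _).le (one_le_rpow one_le_two hh)

variable [Fintype ι]

lemma prod_logGrid_eq (h : ℝ) (n : ι → ℕ) :
    ∏ c, logGrid h n c = 2 ^ (h * Fintype.card ι) * ∏ c, logGrid h (n + 1) c := by
  simp_rw [logGrid_eq_mul_logGrid_add_one h n]
  rw [prod_mul_distrib, prod_const, Finset.card_univ, rpow_mul_natCast zero_le_two]

lemma exists_logGrid_le_le {h : ℝ} (hh : 0 < h) {x : ι → ℝ} (hx₀ : ∀ c, 0 < x c) (hx₁ : x ≤ 1) :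
    ∃ n : ι → ℕ, logGrid h (n + 1) ≤ x ∧ x ≤ logGrid h n ∧
      h * (∑ c, n c : ℕ) ≤ -logb 2 (∏ c, x c) := by
  let u (c : ι) : ℝ := -logb 2 (x c)
  have hu (c : ι) : 0 ≤ u c := neg_nonneg.2 (logb_nonpos one_lt_two (hx₀ c).le (hx₁ c))
  have hxu (c : ι) : x c = 2 ^ (-u c) := by
    rw [neg_neg, rpow_logb two_pos (by norm_num) (hx₀ c)]
  have hfloor (c : ι) : h * ⌊u c / h⌋₊ ≤ u c :=
    (le_div_iff₀' hh).1 (Nat.floor_le (div_nonneg (hu c) hh.le))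
  refine ⟨fun c => ⌊u c / h⌋₊, fun c => ?_, fun c => ?_, ?_⟩
  · rw [hxu c]
    refine rpow_le_rpow_of_exponent_le one_le_two (neg_le_neg ?_)
    rw [← div_le_iff₀' hh]
    exact_mod_cast (Nat.lt_floor_add_one _).le
  · rw [hxu c]
    exact rpow_le_rpow_of_exponent_le one_le_two (neg_le_neg (hfloor c))
  · rw [logb_prod _ _ fun c _ => (hx₀ c).ne', ← sum_neg_distrib]
    push_cast
    rw [mul_sum]
    exact sum_le_sum fun c _ => hfloor c

end LogGrid

/-! ### Bracketing covers of the anchored boxes -/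

section AnchoredBoxes

variable {ι : Type*}

/-- The boxes `[0, x]` with `x` in the unit cube. The empty set is included in order to serve as
the lower end of brackets. -/
def anchoredBoxes (ι : Type*) : Set (Set (ι → ℝ)) :=
  insert ∅ (Icc 0 '' Icc 0 1)

lemma Icc_mem_anchoredBoxes {x : ι → ℝ} (hx₀ : 0 ≤ x) (hx₁ : x ≤ 1) : Icc 0 x ∈ anchoredBoxes ι :=
  mem_insert_of_mem _ ⟨x, ⟨hx₀, hx₁⟩, rfl⟩

lemma subset_Icc_of_mem_anchoredBoxes {C : Set (ι → ℝ)} (hC : C ∈ anchoredBoxes ι) :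
    C ⊆ Icc 0 1 := by
  obtain rfl | ⟨x, hx, rfl⟩ := hC
  · exact empty_subset _
  · exact Icc_subset_Icc_right hx.2

lemma measurableSet_of_mem_anchoredBoxes [Countable ι] {C : Set (ι → ℝ)}
    (hC : C ∈ anchoredBoxes ι) : MeasurableSet C := by
  obtain rfl | ⟨x, -, rfl⟩ := hC
  · exact MeasurableSet.empty
  · exact measurableSet_Icc

variable [Fintype ι]

lemma volume_Icc_zero_pi {x : ι → ℝ} (hx : 0 ≤ x) :
    volume (Icc 0 x) = ENNReal.ofReal (∏ c, x c) := by
  simp only [volume_Icc_pi, Pi.zero_apply, sub_zero,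
    ENNReal.ofReal_prod_of_nonneg fun c _ => hx c]

lemma volume_le_one_of_mem_anchoredBoxes {C : Set (ι → ℝ)} (hC : C ∈ anchoredBoxes ι) :
    volume C ≤ 1 :=
  (measure_mono (subset_Icc_of_mem_anchoredBoxes hC)).trans_eq
    (by simp [volume_Icc_zero_pi (zero_le_one (α := ι → ℝ))])

lemma volume_Icc_zero_diff_Icc_zero {p z : ι → ℝ} (hp : 0 ≤ p) (hpz : p ≤ z) :
    volume (Icc 0 z \ Icc 0 p) = ENNReal.ofReal (∏ c, z c - ∏ c, p c) := by
  have hfin : volume (Icc 0 p) ≠ ⊤ := isCompact_Icc.measure_ne_top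
  rw [measure_sdiff (Icc_subset_Icc_right hpz) measurableSet_Icc.nullMeasurableSet hfin,
    volume_Icc_zero_pi hp, volume_Icc_zero_pi (hp.trans hpz),
    ENNReal.ofReal_sub _ (prod_nonneg fun c _ => hp c)]

lemma exists_ge_prod_eq {x : ι → ℝ} (hx₀ : 0 ≤ x) (hx₁ : x ≤ 1) {a : ℝ}
    (hxa : ∏ c, x c ≤ a) (ha : a ≤ 1) : ∃ y : ι → ℝ, x ≤ y ∧ y ≤ 1 ∧ ∏ c, y c = a := by
  let V (t : ℝ) : ℝ := ∏ c, max (x c) t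
  have hV : ContinuousOn V (Icc 0 1) := by fun_prop
  have hV₀ : V 0 = ∏ c, x c := Finset.prod_congr rfl fun c _ => max_eq_left (hx₀ c)
  have hV₁ : V 1 = 1 := prod_eq_one fun c _ => max_eq_right (hx₁ c)
  obtain ⟨t, ht, hta⟩ : a ∈ V '' Icc 0 1 :=
    intermediate_value_Icc zero_le_one hV ⟨hV₀.trans_le hxa, ha.trans_eq hV₁.symm⟩
  exact ⟨fun c => max (x c) t, fun c => le_max_left _ _, fun c => max_le (hx₁ c) ht.2, hta⟩

lemma exists_pow_succ_le_le_pow {y v : ℝ} (hy₀ : 0 < y) (hy₁ : y < 1) {M : ℕ}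
    (hv : y ^ (M + 1) ≤ v) (hv₁ : v ≤ 1) : ∃ j ≤ M, y ^ (j + 1) ≤ v ∧ v ≤ y ^ j := by
  obtain ⟨j, hj, hj'⟩ := exists_nat_pow_near_of_lt_one ((pow_pos hy₀ _).trans_le hv) hv₁ hy₀ hy₁
  rcases le_total j M with hjM | hMj
  · exact ⟨j, hjM, hj.le, hj'⟩
  · exact ⟨M, le_rfl, hv, hj'.trans (pow_le_pow_of_le_one hy₀.le hy₁.le hMj)⟩

/-- The mesh for which one step in every coordinate of `logGrid` changes the volume by the factor
`2 ^ (2⁻¹ ^ i)`. -/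
noncomputable def gridMesh (ι : Type*) [Fintype ι] (i : ℕ) : ℝ := 2⁻¹ ^ i / Fintype.card ι

open scoped Classical in
/-- Pairs of boxes spanned by opposite corners of cells of the logarithmic grids. The cells in the
`j`-th simplex of indices account for the boxes of volume between `2⁻¹ ^ (j + 1)` and `2⁻¹ ^ j`. -/
noncomputable def gridBrackets (ι : Type*) [Fintype ι] (M : ℕ) :
    Finset (Set (ι → ℝ) × Set (ι → ℝ)) :=
  (range (M + 1)).biUnion fun j =>
    (latticeSimplex ι (Fintype.card ι * (2 ^ (M - j) * (j + 1)))).image fun n =>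
      (Icc 0 (logGrid (gridMesh ι (M - j)) (n + 1)), Icc 0 (logGrid (gridMesh ι (M - j)) n))

lemma gridMesh_nonneg (i : ℕ) : 0 ≤ gridMesh ι i := by
  unfold gridMesh
  positivity

lemma mem_anchoredBoxes_and_subset_of_mem_gridBrackets {M : ℕ}
    {b : Set (ι → ℝ) × Set (ι → ℝ)} (hb : b ∈ gridBrackets ι M) :
    b.1 ∈ anchoredBoxes ι ∧ b.2 ∈ anchoredBoxes ι ∧ b.1 ⊆ b.2 := by
  simp only [gridBrackets, Finset.mem_biUnion, Finset.mem_image] at hb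
  obtain ⟨j, -, n, -, rfl⟩ := hb
  have hmesh := gridMesh_nonneg (ι := ι) (M - j)
  exact ⟨Icc_mem_anchoredBoxes (fun c => (logGrid_pos _ _ c).le) (logGrid_le_one hmesh _),
    Icc_mem_anchoredBoxes (fun c => (logGrid_pos _ _ c).le) (logGrid_le_one hmesh _),
    Icc_subset_Icc_right (logGrid_add_one_le hmesh n)⟩

variable [Nonempty ι]

lemma card_gridBrackets_le (M : ℕ) :
    (#(gridBrackets ι M) : ℝ) ≤ (2 * exp 1) ^ Fintype.card ι * (2 ^ M + 1) ^ Fintype.card ι := by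
  classical
  refine le_trans ?_ (sum_choose_le Fintype.card_pos M)
  have h : #(gridBrackets ι M) ≤ ∑ j ∈ range (M + 1),
      (Fintype.card ι * (2 ^ (M - j) * (j + 1)) + Fintype.card ι).choose (Fintype.card ι) := by
    refine card_biUnion_le.trans (sum_le_sum fun j _ => card_image_le.trans ?_)
    convert card_latticeSimplex_le (ι := ι) _
  exact_mod_cast h

lemma prod_logGrid_gridMesh_le (i : ℕ) (n : ι → ℕ) :
    ∏ c, logGrid (gridMesh ι i) n c ≤ (1 + 2⁻¹ ^ i) * ∏ c, logGrid (gridMesh ι i) (n + 1) c := by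
  have hmesh : gridMesh ι i * Fintype.card ι = 2⁻¹ ^ i :=
    div_mul_cancel₀ _ (by exact_mod_cast Fintype.card_ne_zero)
  have hbernoulli : (2 : ℝ) ^ ((2⁻¹ : ℝ) ^ i) ≤ 1 + 2⁻¹ ^ i := by
    have := rpow_one_add_le_one_add_mul_self (s := 1) (by norm_num) (p := (2⁻¹ : ℝ) ^ i)
      (by positivity) (pow_le_one₀ (by norm_num) (by norm_num))
    rwa [one_add_one_eq_two, mul_one] at this
  rw [prod_logGrid_eq, hmesh]
  exact mul_le_mul_of_nonneg_right hbernoulli (prod_nonneg fun c _ => (logGrid_pos _ _ c).le)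

lemma le_card_mul_of_gridMesh_mul_le {i j N : ℕ} {v : ℝ} (hv : 2⁻¹ ^ (j + 1) ≤ v)
    (hN : gridMesh ι i * N ≤ -logb 2 v) : N ≤ Fintype.card ι * (2 ^ i * (j + 1)) := by
  have hlogb : -logb 2 v ≤ j + 1 := by
    rw [neg_le, le_logb_iff_rpow_le one_lt_two ((by positivity : (0 : ℝ) < _).trans_le hv)]
    rw [inv_pow, ← rpow_natCast, ← rpow_neg zero_le_two] at hv
    exact_mod_cast hv
  have hN' := hN.trans hlogb
  rw [gridMesh, inv_pow, inv_eq_one_div, div_div, div_mul_eq_mul_div, one_mul,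
    div_le_iff₀ (by positivity)] at hN'
  have hcast : (N : ℝ) ≤ (Fintype.card ι * (2 ^ i * (j + 1)) : ℕ) := by
    push_cast
    linarith
  exact_mod_cast hcast

lemma exists_mem_gridBrackets {M : ℕ} {x : ι → ℝ} (hx₀ : 0 ≤ x) (hx₁ : x ≤ 1)
    (hx : 2⁻¹ ^ (M + 1) ≤ ∏ c, x c) :
    ∃ p z : ι → ℝ, (Icc 0 p, Icc 0 z) ∈ gridBrackets ι M ∧ 0 ≤ p ∧ p ≤ x ∧ x ≤ z ∧
      ∏ c, z c ≤ 2 * ∏ c, x c ∧ ∏ c, z c - ∏ c, p c ≤ 2⁻¹ ^ M := by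
  classical
  have hxpos (c : ι) : 0 < x c := (hx₀ c).lt_of_ne'
    (prod_ne_zero_iff.1 ((by positivity : (0 : ℝ) < _).trans_le hx).ne' c (Finset.mem_univ c))
  obtain ⟨j, hjM, hjx, hxj⟩ := exists_pow_succ_le_le_pow (by norm_num) (by norm_num) hx
    (prod_le_one (fun c _ => hx₀ c) fun c _ => hx₁ c)
  have hmesh : 0 < gridMesh ι (M - j) := by
    unfold gridMesh
    positivity
  obtain ⟨n, hpx, hxz, hn⟩ := exists_logGrid_le_le hmesh hxpos hx₁
  have hsimplex := le_card_mul_of_gridMesh_mul_le hjx hn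
  set p := logGrid (gridMesh ι (M - j)) (n + 1)
  set z := logGrid (gridMesh ι (M - j)) n
  have hp : 0 ≤ p := fun c => (logGrid_pos _ _ c).le
  have hpprod : ∏ c, p c ≤ ∏ c, x c := prod_le_prod (fun c _ => hp c) fun c _ => hpx c
  have hratio : ∏ c, z c ≤ (1 + 2⁻¹ ^ (M - j)) * ∏ c, p c := prod_logGrid_gridMesh_le _ n
  refine ⟨p, z, ?_, hp, hpx, hxz, ?_, ?_⟩
  · exact mem_biUnion.2 ⟨j, mem_range_succ_iff.2 hjM,
      mem_image_of_mem _ (mem_latticeSimplex.2 hsimplex)⟩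
  · have hle : (2⁻¹ : ℝ) ^ (M - j) ≤ 1 := pow_le_one₀ (by norm_num) (by norm_num)
    calc ∏ c, z c ≤ (1 + 2⁻¹ ^ (M - j)) * ∏ c, p c := hratio
      _ ≤ (1 + 1) * ∏ c, x c := by gcongr; exact prod_nonneg fun c _ => hp c
      _ = 2 * ∏ c, x c := by rw [one_add_one_eq_two]
  · calc ∏ c, z c - ∏ c, p c ≤ 2⁻¹ ^ (M - j) * ∏ c, p c := by linarith
      _ ≤ 2⁻¹ ^ (M - j) * 2⁻¹ ^ j := by gcongr; exact hpprod.trans hxj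
      _ = 2⁻¹ ^ M := by rw [← pow_add, Nat.sub_add_cancel hjM]

lemma exists_mem_gridBrackets_volume_le {M : ℕ} {x : ι → ℝ} (hx₀ : 0 ≤ x) (hx₁ : x ≤ 1)
    (hx : ∏ c, x c ≤ 2⁻¹ ^ (M + 1)) :
    ∃ b ∈ gridBrackets ι M, Icc 0 x ⊆ b.2 ∧ volume b.2 ≤ ENNReal.ofReal (2⁻¹ ^ M) := by
  obtain ⟨y, hxy, hy₁, hy⟩ := exists_ge_prod_eq hx₀ hx₁ hx
    (pow_le_one₀ (by norm_num) (by norm_num))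
  obtain ⟨p, z, hmem, -, -, hyz, hz, -⟩ := exists_mem_gridBrackets (hx₀.trans hxy) hy₁ hy.ge
  refine ⟨_, hmem, Icc_subset_Icc_right (hxy.trans hyz), ?_⟩
  rw [volume_Icc_zero_pi (hx₀.trans (hxy.trans hyz))]
  refine ENNReal.ofReal_le_ofReal (hz.trans_eq ?_)
  rw [hy, pow_succ']
  ring

lemma exists_mem_gridBrackets_of_mem_anchoredBoxes (M : ℕ) {C : Set (ι → ℝ)}
    (hC : C ∈ anchoredBoxes ι) :
    ∃ b ∈ gridBrackets ι M, C ⊆ b.2 ∧ (volume b.2 ≤ ENNReal.ofReal (2⁻¹ ^ M) ∨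
      b.1 ⊆ C ∧ volume (b.2 \ b.1) ≤ ENNReal.ofReal (2⁻¹ ^ M)) := by
  obtain rfl | ⟨x, ⟨hx₀, hx₁⟩, rfl⟩ := hC
  · obtain ⟨b, hb, -, hvol⟩ := exists_mem_gridBrackets_volume_le (ι := ι) (M := M) le_rfl
      zero_le_one (by simp)
    exact ⟨b, hb, empty_subset _, .inl hvol⟩
  rcases le_total (∏ c, x c) (2⁻¹ ^ (M + 1)) with hx | hx
  · obtain ⟨b, hb, hsub, hvol⟩ := exists_mem_gridBrackets_volume_le hx₀ hx₁ hx
    exact ⟨b, hb, hsub, .inl hvol⟩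
  · obtain ⟨p, z, hmem, hp, hpx, hxz, -, hdiff⟩ := exists_mem_gridBrackets hx₀ hx₁ hx
    refine ⟨_, hmem, Icc_subset_Icc_right hxz, .inr ⟨Icc_subset_Icc_right hpx, ?_⟩⟩
    rw [volume_Icc_zero_diff_Icc_zero hp (hpx.trans hxz)]
    exact ENNReal.ofReal_le_ofReal hdiff

variable (ι)

theorem exists_isBracketingCover_anchoredBoxes (M : ℕ) :
    ∃ B, (#B : ℝ) ≤ (2 * exp 1) ^ Fintype.card ι * (2 ^ M + 1) ^ Fintype.card ι ∧
      IsBracketingCover volume (anchoredBoxes ι) (ENNReal.ofReal (2⁻¹ ^ M)) B ∧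
      ∀ b ∈ B, volume b.2 ≤ ENNReal.ofReal (2⁻¹ ^ M) → b.1 = ∅ := by
  obtain ⟨B, hcard, hB⟩ := exists_isBracketingCover_card_le (𝓒 := anchoredBoxes ι)
    (mem_insert _ _) (fun _ => mem_anchoredBoxes_and_subset_of_mem_gridBrackets)
    fun _ => exists_mem_gridBrackets_of_mem_anchoredBoxes M
  exact ⟨B, (Nat.cast_le.2 hcard).trans (card_gridBrackets_le M), hB⟩

end AnchoredBoxes

theorem stmt_6_general {ι : Type*} [Fintype ι] [Nonempty ι] (K : ℕ) :
    ∃ A : ℕ → Finset (Set (ι → ℝ)),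
      (∀ k ≤ K, (#(A k) : ℝ) ≤
        (2 * exp 1) ^ Fintype.card ι * (2 ^ (k + 1) + 1) ^ Fintype.card ι) ∧
      (∀ k ≤ K, ∀ I ∈ A k, MeasurableSet I ∧ I ⊆ Icc 0 1 ∧
        volume I ≤ ENNReal.ofReal (2⁻¹ ^ k)) ∧
      ∀ x ∈ Icc (0 : ι → ℝ) 1, ∃ I : ℕ → Set (ι → ℝ),
        (∀ k ≤ K, I k ∈ A k) ∧
        (∀ k ≤ K, ∀ l ≤ K, k ≠ l → Disjoint (I k) (I l)) ∧
        (⋃ k ∈ range K, I k) ⊆ Icc 0 x ∧ Icc 0 x ⊆ ⋃ k ∈ range (K + 1), I k := by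
  choose B hcard hcover hempty using exists_isBracketingCover_anchoredBoxes ι
  have hB₀ : ∀ b ∈ B 0, b.1 = ∅ := fun b hb => hempty 0 b hb <| by
    simpa using volume_le_one_of_mem_anchoredBoxes ((hcover 0).upper_mem b hb)
  obtain ⟨A, hA, hAK, hdiff, hlayer⟩ := exists_isLayering_of_isBracketingCover hcover hB₀ K
  refine ⟨A, fun k hk => ?_, fun k hk I hI => ?_, fun x hx => ?_⟩
  · rcases hk.lt_or_eq with hk | rfl
    · exact (Nat.cast_le.2 (hA k hk)).trans (hcard (k + 1))
    · refine (Nat.cast_le.2 hAK).trans ((hcard k).trans ?_)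
      gcongr
      exacts [one_le_two, k.le_succ]
  · obtain ⟨C, hC, D, hD, rfl, hvol⟩ := hdiff k hk I hI
    exact ⟨(measurableSet_of_mem_anchoredBoxes hC).diff (measurableSet_of_mem_anchoredBoxes hD),
      Set.sdiff_subset.trans (subset_Icc_of_mem_anchoredBoxes hC), hvol⟩
  · obtain ⟨L, U, I, hL, hU, hIL, hIU⟩ := hlayer _ (Icc_mem_anchoredBoxes hx.1 hx.2)
    refine ⟨I, fun k hk => hIU.mem k (Nat.lt_succ_of_le hk), fun k hk l hl =>
      hIU.disjoint k (Nat.lt_succ_of_le hk) l (Nat.lt_succ_of_le hl), ?_, ?_⟩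
    · rwa [hIL.biUnion_eq]
    · rwa [hIU.biUnion_eq]

theorem stmt_6 (s K : ℕ) (hs : 1 ≤ s) (hK : 1 ≤ K) :
    ∃ A : ℕ → Finset (Set (Fin s → ℝ)),
      (∀ k ≤ K, ((A k).card : ℝ) ≤ (2 * Real.exp 1) ^ s * ((2:ℝ) ^ (k + 1) + 1) ^ s) ∧
      (∀ k ≤ K, ∀ I ∈ A k, MeasurableSet I ∧ I ⊆ Set.Icc (0 : Fin s → ℝ) 1 ∧
        volume I ≤ ENNReal.ofReal ((2:ℝ)⁻¹ ^ k)) ∧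
      (∀ x ∈ Set.Icc (0 : Fin s → ℝ) 1, ∃ I : ℕ → Set (Fin s → ℝ),
        (∀ k ≤ K, I k ∈ A k) ∧
        (∀ k ≤ K, ∀ l ≤ K, k ≠ l → Disjoint (I k) (I l)) ∧
        (⋃ k ∈ Finset.range K, I k) ⊆ Set.Icc 0 x ∧
        Set.Icc 0 x ⊆ ⋃ k ∈ Finset.range (K + 1), I k) := by
  have : Nonempty (Fin s) := ⟨⟨0, hs⟩⟩
  simpa only [Fintype.card_fin] using stmt_6_general (ι := Fin s) K
end

section
/- For all integers k and K with 3 ≤ K and 2 ≤ k ≤ K: √( 1 + log(2(2^{k+1} + 1)) + (k+1)·log 2 ) · √( 2·2^{−k}(1 − 2^{−k}) + 2.08·4·2^{−K}/3 ) ≤ 2.08. Consequently, for every real s ≥ 1 and q ∈ (0,1), the constant c_k = √( 1 + log(2(2^{k+1} + 1)) + log(2^{k+1}(1−q)^{−1})/s ) · √( 2·2^{−k}(1 − 2^{−k}) + 2.08·4·2^{−K}/3 ) satisfies c_k·√s / √(s + log((1−q)^{−1})) ≤ 2.08. -/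
/-!
Write `A` and `B` for the two radicands of the first claim and put
`y = 2 ^ (-K) ≤ min (1/8) (2 ^ (-k))`. Since `log (x + 1) ≤ log x + 1 / x`, the radicand `A` grows
at most linearly in `k`, whereas `B` decays like `2 ^ (-k)`. For `k ≤ 3` the bound `y ≤ 1/8` reduces
`A * B ≤ 2.08 ^ 2` to arithmetic (the case `k = 2` is nearly sharp); for `k ≥ 4` one has
`A ≤ 0.9 * 2 ^ k` and, by `y ≤ 2 ^ (-k)`, also `B ≤ 4.774 * 2 ^ (-k)`.

For the second claim put `a = 1 + log (2 (2 ^ (k + 1) + 1)) ≥ 1`, `m = (k + 1) log 2 ≥ 0` and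
`L = log (1 - q)⁻¹ ≥ 0`. Then `(a + (m + L) / s) s = a s + m + L ≤ (a + m) (s + L)` for `s ≥ 1`, so
the quantity in question is at most `√(a + m) * √B = √A * √B`.
-/

open Real

lemma log_add_one_le_log_add_inv {x : ℝ} (hx : 0 < x) : log (x + 1) ≤ log x + x⁻¹ := by
  have hfactor : x + 1 = x * (1 + x⁻¹) := by field_simp
  have hlog : log (1 + x⁻¹) ≤ 1 + x⁻¹ - 1 := log_le_sub_one_of_pos (by positivity)
  rw [hfactor, log_mul hx.ne' (by positivity)]
  linarith

lemma log_two_mul_two_pow_add_one_le (n : ℕ) :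
    log (2 * ((2 : ℝ) ^ n + 1)) ≤ (n + 1) * log 2 + ((2 : ℝ) ^ n)⁻¹ := by
  have hlog := log_add_one_le_log_add_inv (show (0 : ℝ) < 2 ^ n by positivity)
  rw [log_pow] at hlog
  rw [log_mul two_ne_zero (by positivity)]
  linarith

lemma log_two_mul_two_pow_add_one_nonneg (n : ℕ) : 0 ≤ log (2 * ((2 : ℝ) ^ n + 1)) :=
  log_nonneg (by linarith [show (0 : ℝ) < 2 ^ n by positivity])

lemma log_radicand_le (n : ℕ) :
    1 + log (2 * ((2 : ℝ) ^ (n + 1) + 1)) + ((n : ℝ) + 1) * log 2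
      ≤ 1 + (2 * n + 3) * 0.6932 + ((2 : ℝ) ^ (n + 1))⁻¹ := by
  have hlog := log_two_mul_two_pow_add_one_le (n + 1)
  have hlog_two : (2 * (n : ℝ) + 3) * log 2 ≤ (2 * n + 3) * 0.6932 := by
    gcongr
    linarith [log_two_lt_d9]
  push_cast at hlog
  linarith

lemma linear_le_two_pow {n : ℕ} (hn : 4 ≤ n) :
    17 / 16 + (2 * (n : ℝ) + 3) * 0.6932 ≤ 0.9 * 2 ^ n := by
  induction n, hn using Nat.le_induction with
  | base => norm_num
  | succ m hm ih =>
    have hm_cast : (4 : ℝ) ≤ m := by exact_mod_cast hm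
    push_cast
    rw [pow_succ]
    linarith

lemma linear_mul_radicand_le_of_le_three {n : ℕ} {y : ℝ} (hn : n ≤ 3) (hy : y ≤ 1 / 8) :
    (1 + (2 * n + 3) * 0.6932 + ((2 : ℝ) ^ (n + 1))⁻¹)
        * (2 * ((2 : ℝ) ^ n)⁻¹ * (1 - ((2 : ℝ) ^ n)⁻¹) + 2.08 * 4 * y / 3)
      ≤ 2.08 ^ 2 := by
  interval_cases n <;> norm_num <;> linarith

lemma linear_mul_radicand_le_of_four_le {n : ℕ} {y : ℝ} (hn : 4 ≤ n) (hy : y ≤ ((2 : ℝ) ^ n)⁻¹) :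
    (1 + (2 * n + 3) * 0.6932 + ((2 : ℝ) ^ (n + 1))⁻¹)
        * (2 * ((2 : ℝ) ^ n)⁻¹ * (1 - ((2 : ℝ) ^ n)⁻¹) + 2.08 * 4 * y / 3)
      ≤ 2.08 ^ 2 := by
  have hinv : ((2 : ℝ) ^ (n + 1))⁻¹ ≤ 1 / 16 := by
    rw [inv_le_comm₀ (by positivity) (by norm_num)]
    calc (1 / 16 : ℝ)⁻¹ = 2 ^ 4 := by norm_num
      _ ≤ 2 ^ (n + 1) := pow_le_pow_right₀ one_le_two (by omega)
  have hlinear : 1 + (2 * n + 3) * 0.6932 + ((2 : ℝ) ^ (n + 1))⁻¹ ≤ 0.9 * 2 ^ n := by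
    linarith [linear_le_two_pow hn]
  have hradicand : 2 * ((2 : ℝ) ^ n)⁻¹ * (1 - ((2 : ℝ) ^ n)⁻¹) + 2.08 * 4 * y / 3
      ≤ 4.774 * ((2 : ℝ) ^ n)⁻¹ := by
    have hpos : (0 : ℝ) < ((2 : ℝ) ^ n)⁻¹ := by positivity
    linarith [sq_nonneg ((2 : ℝ) ^ n)⁻¹]
  calc _ ≤ (1 + (2 * n + 3) * 0.6932 + ((2 : ℝ) ^ (n + 1))⁻¹) * (4.774 * ((2 : ℝ) ^ n)⁻¹) := by
        gcongr
    _ ≤ (0.9 * 2 ^ n) * (4.774 * ((2 : ℝ) ^ n)⁻¹) := by gcongr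
    _ = 0.9 * 4.774 := by field_simp
    _ ≤ 2.08 ^ 2 := by norm_num

lemma sqrt_radicand_mul_sqrt_radicand_le {n : ℕ} {y : ℝ} (hy₀ : 0 ≤ y) (hy : y ≤ 1 / 8)
    (hyn : y ≤ ((2 : ℝ) ^ n)⁻¹) :
    √(1 + log (2 * ((2 : ℝ) ^ (n + 1) + 1)) + ((n : ℝ) + 1) * log 2)
        * √(2 * ((2 : ℝ) ^ n)⁻¹ * (1 - ((2 : ℝ) ^ n)⁻¹) + 2.08 * 4 * y / 3)
      ≤ 2.08 := by
  have hinv : 0 ≤ 1 - ((2 : ℝ) ^ n)⁻¹ :=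
    sub_nonneg.mpr (inv_le_one_of_one_le₀ (one_le_pow₀ one_le_two))
  have hnum : (1 + (2 * n + 3) * 0.6932 + ((2 : ℝ) ^ (n + 1))⁻¹)
      * (2 * ((2 : ℝ) ^ n)⁻¹ * (1 - ((2 : ℝ) ^ n)⁻¹) + 2.08 * 4 * y / 3) ≤ 2.08 ^ 2 := by
    rcases le_or_gt n 3 with hn | hn
    · exact linear_mul_radicand_le_of_le_three hn hy
    · exact linear_mul_radicand_le_of_four_le hn hyn
  rw [← sqrt_mul' _ (by positivity)]
  exact sqrt_le_iff.mpr ⟨by norm_num,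
    (mul_le_mul_of_nonneg_right (log_radicand_le n) (by positivity)).trans hnum⟩

lemma sqrt_add_div_mul_sqrt_div_sqrt_le {a m L s : ℝ} (ha : 1 ≤ a) (hm : 0 ≤ m) (hL : 0 ≤ L)
    (hs : 1 ≤ s) : √(a + (m + L) / s) * √s / √(s + L) ≤ √(a + m) := by
  have hprod : (a + (m + L) / s) * s ≤ (a + m) * (s + L) := calc
    (a + (m + L) / s) * s = a * s + m * 1 + 1 * L := by field_simp; ring
    _ ≤ a * s + m * s + (a + m) * L := by gcongr; linarith
    _ = (a + m) * (s + L) := by ring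
  rw [div_le_iff₀ (by positivity), ← sqrt_mul (by positivity), ← sqrt_mul (by positivity)]
  exact sqrt_le_sqrt hprod

lemma two_rpow_neg_le_inv_two_pow {n : ℕ} {K : ℝ} (hK : n ≤ K) :
    (2 : ℝ) ^ (-K) ≤ ((2 : ℝ) ^ n)⁻¹ := by
  rw [rpow_neg zero_le_two, ← rpow_natCast]
  gcongr
  exact one_le_two

theorem stmt_16_general (k : ℤ) (K : ℝ) (hk : 0 ≤ k) (hK : 3 ≤ K) (hkK : (k : ℝ) ≤ K) :
    √(1 + log (2 * ((2 : ℝ) ^ (k + 1) + 1)) + ((k : ℝ) + 1) * log 2)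
        * √(2 * (2 : ℝ) ^ (-k) * (1 - (2 : ℝ) ^ (-k)) + 2.08 * 4 * (2 : ℝ) ^ (-K) / 3)
      ≤ 2.08 ∧
    ∀ s : ℝ, 1 ≤ s → ∀ q : ℝ, q ∈ Set.Ico (0 : ℝ) 1 →
      (√(1 + log (2 * ((2 : ℝ) ^ (k + 1) + 1)) + log ((2 : ℝ) ^ (k + 1) * (1 - q)⁻¹) / s)
          * √(2 * (2 : ℝ) ^ (-k) * (1 - (2 : ℝ) ^ (-k)) + 2.08 * 4 * (2 : ℝ) ^ (-K) / 3))
        * √s / √(s + log (1 - q)⁻¹) ≤ 2.08 := by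
  lift k to ℕ using hk with n
  have hpow : (2 : ℝ) ^ ((n : ℤ) + 1) = 2 ^ (n + 1) := by
    exact_mod_cast zpow_natCast (2 : ℝ) (n + 1)
  have hy : (2 : ℝ) ^ (-K) ≤ 1 / 8 :=
    (two_rpow_neg_le_inv_two_pow (n := 3) (by exact_mod_cast hK)).trans_eq (by norm_num)
  have hyn : (2 : ℝ) ^ (-K) ≤ ((2 : ℝ) ^ n)⁻¹ := two_rpow_neg_le_inv_two_pow hkK
  have hfirst := sqrt_radicand_mul_sqrt_radicand_le (by positivity) hy hyn
  simp only [hpow, zpow_neg, zpow_natCast, Int.cast_natCast]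
  refine ⟨hfirst, fun s hs q ⟨hq₀, hq₁⟩ ↦ ?_⟩
  have hq : 0 < 1 - q := sub_pos.mpr hq₁
  have hL : 0 ≤ log (1 - q)⁻¹ := log_nonneg ((one_le_inv₀ hq).mpr (by linarith))
  have hscaled := sqrt_add_div_mul_sqrt_div_sqrt_le
    (le_add_of_nonneg_right (log_two_mul_two_pow_add_one_nonneg (n + 1)))
    (show 0 ≤ ((n : ℝ) + 1) * log 2 by positivity) hL hs
  have hlog : log ((2 : ℝ) ^ (n + 1) * (1 - q)⁻¹) = (n + 1) * log 2 + log (1 - q)⁻¹ := by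
    rw [log_mul (by positivity) (by positivity), log_pow, Nat.cast_succ]
  rw [hlog, mul_right_comm, mul_div_right_comm]
  exact (mul_le_mul_of_nonneg_right hscaled (sqrt_nonneg _)).trans hfirst

theorem stmt_16 (k K : ℤ) (hK : 3 ≤ K) (hk2 : 2 ≤ k) (hkK : k ≤ K) :
    Real.sqrt (1 + Real.log (2 * ((2:ℝ) ^ (k + 1) + 1)) + ((k : ℝ) + 1) * Real.log 2)
        * Real.sqrt (2 * (2:ℝ) ^ (-k) * (1 - (2:ℝ) ^ (-k)) + 2.08 * 4 * (2:ℝ) ^ (-K) / 3)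
      ≤ 2.08 ∧
    ∀ s : ℝ, 1 ≤ s → ∀ q : ℝ, q ∈ Set.Ioo (0:ℝ) 1 →
      (Real.sqrt (1 + Real.log (2 * ((2:ℝ) ^ (k + 1) + 1))
            + Real.log ((2:ℝ) ^ (k + 1) * (1 - q)⁻¹) / s)
          * Real.sqrt (2 * (2:ℝ) ^ (-k) * (1 - (2:ℝ) ^ (-k)) + 2.08 * 4 * (2:ℝ) ^ (-K) / 3))
        * Real.sqrt s / Real.sqrt (s + Real.log (1 - q)⁻¹) ≤ 2.08 := by
  simp only [← rpow_intCast 2 (-K), Int.cast_neg]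
  obtain ⟨hfirst, hsecond⟩ :=
    stmt_16_general k K (by omega) (by exact_mod_cast hK) (by exact_mod_cast hkK)
  exact ⟨hfirst, fun s hs q hq ↦ hsecond s hs q (Set.Ioo_subset_Ico_self hq)⟩
end

section
/- Let K ≥ 3 be an integer, s ≥ 1 a real number, and q ∈ (0,1). For 2 ≤ k ≤ K set λ_k = √( 2·2^{−k}(1 − 2^{−k}) + 2.08·4·2^{−K}/3 ) and c_k = λ_k · √( 1 + log(2(2^{k+1} + 1)) + log(2^{k+1}(1−q)^{−1})/s ). Then ∑_{k=2}^{K} c_k ≤ 3.28 · √( 5.98 + log((1−q)^{−1})/s ). In particular, for every integer K ≥ 3 one has (1/√2) · ∑_{k=2}^{K} √k · λ_k ≤ 3.28. -/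
open Real

/-!
Put `x = 2⁻ᵏ`, `b k = √(k x)`, `p k = √(k x (1 - x))` and `S K = p 2 + ⋯ + p K`. Since
`1 + log (2 (2 ^ (k + 1) + 1)) + (k + 1) log 2 ≤ 2.99 k` for `k ≥ 2`, the logarithmic factor of
`c_k` is at most `√(k / 2) · √(5.98 + log (1 - q)⁻¹ / s)`, so everything rests on the bound `3.28`
for `∑ √(k / 2) λ_k`.

The tangent line of the square root gives `√(k / 2) λ_k ≤ p k + (2.08 / 3) 2⁻ᴷ (k / p k)`. As `b k`
decays roughly like `2 ^ (-k / 2)`, the corrections add up to at most a multiple of `b K`. The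
multiple `1 + √2 = ∑_{j ≥ 1} 2 ^ (-j / 2)` suffices, and `S K + (1 + √2) b K` is still increasing
in `K`. With the larger constant `11 / 4`, on the other hand, `S K + (11 / 4) b K` is decreasing
from `K = 14` on. Hence the single numerical estimate `S 14 + (11 / 4) b 14 ≤ 3.28` controls all
`K`.
-/

section SquareRoot

lemma sqrt_add_le_sqrt_add_div {x y : ℝ} (hx : 0 < x) (hxy : 0 ≤ x + y) :
    √(x + y) ≤ √x + y / (2 * √x) := by
  have amgm : 2 * √(x + y) * √x ≤ (x + y) + x := by
    simpa only [sq_sqrt hxy, sq_sqrt hx.le] using two_mul_le_add_sq √(x + y) √x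
  have hsum : √x + y / (2 * √x) = ((x + y) + x) / (2 * √x) := by
    field_simp
    rw [sq_sqrt hx.le]
    ring
  rw [hsum, le_div_iff₀ (by positivity)]
  linarith only [amgm]

lemma inv_sqrt_two_mul_sqrt (x : ℝ) : 1 / √2 * √x = √(x / 2) := by
  rw [sqrt_div' x zero_le_two]
  ring

end SquareRoot

section Envelope

variable {k : ℕ}

lemma inv_two_pow_le_inv (hk : 1 ≤ k) : (2 : ℝ)⁻¹ ^ k ≤ (k : ℝ)⁻¹ := by
  have hpow : (k : ℝ) ≤ 2 ^ k := by exact_mod_cast Nat.lt_two_pow_self.le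
  rw [inv_pow]
  gcongr

lemma inv_two_pow_le_half (hk : 1 ≤ k) : (2 : ℝ)⁻¹ ^ k ≤ 1 / 2 :=
  (pow_le_of_le_one (by norm_num) (by norm_num) (by omega)).trans_eq (one_div 2).symm

/-- `√(k 2⁻ᵏ)`, the scale against which both the tail of `mainSum` and `correction` are measured. -/
noncomputable def envelope (k : ℕ) : ℝ := √(k * (2 : ℝ)⁻¹ ^ k)

/-- `√(k 2⁻ᵏ (1 - 2⁻ᵏ))`, the value of `√(k / 2) λ_k` without the `2⁻ᴷ` term in `λ_k`. -/
noncomputable def mainTerm (k : ℕ) : ℝ := √(k * (2 : ℝ)⁻¹ ^ k * (1 - (2 : ℝ)⁻¹ ^ k))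

lemma envelope_sq (k : ℕ) : envelope k ^ 2 = k * (2 : ℝ)⁻¹ ^ k := sq_sqrt (by positivity)

lemma envelope_nonneg (k : ℕ) : 0 ≤ envelope k := sqrt_nonneg _

lemma mainTerm_eq_envelope_mul (k : ℕ) : mainTerm k = envelope k * √(1 - (2 : ℝ)⁻¹ ^ k) :=
  sqrt_mul (by positivity) _

lemma mainTerm_pos (hk : 1 ≤ k) : 0 < mainTerm k := by
  have hhalf := inv_two_pow_le_half hk
  have hone : 0 < 1 - (2 : ℝ)⁻¹ ^ k := by linarith
  exact sqrt_pos.mpr (by positivity)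

lemma mainTerm_le_envelope (k : ℕ) : mainTerm k ≤ envelope k := by
  rw [mainTerm_eq_envelope_mul]
  refine mul_le_of_le_one_right (envelope_nonneg k) (sqrt_le_one.mpr ?_)
  exact sub_le_self 1 (by positivity)

lemma one_sub_inv_mul_envelope_le_mainTerm (hk : 1 ≤ k) :
    (1 - (k : ℝ)⁻¹) * envelope k ≤ mainTerm k := by
  have hinv := inv_two_pow_le_inv hk
  have hpos : (0 : ℝ) < (2 : ℝ)⁻¹ ^ k := by positivity
  rw [mainTerm_eq_envelope_mul, mul_comm]
  gcongr
  · exact envelope_nonneg k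
  · exact (sub_le_sub_left hinv 1).trans (le_sqrt_self_iff.mpr (by linarith))

lemma envelope_le_one_add_inv_mul_mainTerm (hk : 1 ≤ k) :
    envelope k ≤ (1 + (k : ℝ)⁻¹) * mainTerm k := by
  have hinv := inv_two_pow_le_inv hk
  have hhalf := inv_two_pow_le_half hk
  set x : ℝ := (2 : ℝ)⁻¹ ^ k
  have hx : 0 < x := by positivity
  have hroot : 1 ≤ (1 + x) * √(1 - x) := by
    have hprod : 0 ≤ x * (1 - x - x ^ 2) := mul_nonneg hx.le (by nlinarith)
    rw [← sqrt_sq (by positivity : 0 ≤ 1 + x), ← sqrt_mul (by positivity), one_le_sqrt]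
    linarith
  calc envelope k ≤ envelope k * ((1 + x) * √(1 - x)) :=
        le_mul_of_one_le_right (envelope_nonneg k) hroot
    _ = (1 + x) * mainTerm k := by rw [mainTerm_eq_envelope_mul]; ring
    _ ≤ (1 + (k : ℝ)⁻¹) * mainTerm k := by
        gcongr
        exact (mainTerm_pos hk).le

lemma envelope_sq_div_mainTerm_le (hk : 1 ≤ k) :
    envelope k ^ 2 / mainTerm k ≤ (1 + (k : ℝ)⁻¹) * envelope k := by
  rw [div_le_iff₀ (mainTerm_pos hk), sq]
  calc envelope k * envelope k ≤ envelope k * ((1 + (k : ℝ)⁻¹) * mainTerm k) := by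
        gcongr
        · exact envelope_nonneg k
        · exact envelope_le_one_add_inv_mul_mainTerm hk
    _ = (1 + (k : ℝ)⁻¹) * envelope k * mainTerm k := by ring

lemma envelope_eq_sqrt_mul_envelope_succ (k : ℕ) :
    envelope k = √(2 * (1 - ((k + 1 : ℕ) : ℝ)⁻¹)) * envelope (k + 1) := by
  rw [envelope, envelope, ← sqrt_mul' _ (by positivity)]
  congr 1
  push_cast
  field_simp
  ring

lemma envelope_le_sqrt_two_mul_envelope_succ (k : ℕ) :
    envelope k ≤ √2 * (1 - ((k + 1 : ℕ) : ℝ)⁻¹ / 2) * envelope (k + 1) := by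
  have hinv : ((k + 1 : ℕ) : ℝ)⁻¹ ≤ 1 := inv_le_one_of_one_le₀ (by simp)
  rw [envelope_eq_sqrt_mul_envelope_succ, sqrt_mul zero_le_two]
  gcongr
  · exact envelope_nonneg _
  · simpa only [sub_eq_add_neg, neg_div] using
      sqrt_one_add_le (x := -((k + 1 : ℕ) : ℝ)⁻¹) (by linarith)

lemma mul_envelope_succ_le_envelope (hk : 14 ≤ k) : 15 / 11 * envelope (k + 1) ≤ envelope k := by
  have hinv : ((k + 1 : ℕ) : ℝ)⁻¹ ≤ 1 / 15 := by
    rw [one_div]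
    gcongr
    exact_mod_cast (by omega : 15 ≤ k + 1)
  rw [envelope_eq_sqrt_mul_envelope_succ k]
  gcongr
  · exact envelope_nonneg _
  · exact le_sqrt_of_sq_le (by linarith)

end Envelope

section PartialSums

/-- The sum of `mainTerm k` over `2 ≤ k ≤ K`, empty for `K ≤ 1`. -/
noncomputable def mainSum (K : ℕ) : ℝ := ∑ k ∈ Finset.Icc 2 K, mainTerm k

/-- The total first-order contribution of the `2⁻ᴷ` terms of the `λ_k` to `∑ √(k / 2) λ_k`. -/
noncomputable def correction (K : ℕ) : ℝ :=
  ∑ k ∈ Finset.Icc 2 K, 2.08 / 3 * (2 : ℝ)⁻¹ ^ K * (k / mainTerm k)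

variable {K : ℕ}

lemma mainSum_succ (hK : 1 ≤ K) : mainSum (K + 1) = mainSum K + mainTerm (K + 1) :=
  Finset.sum_Icc_succ_top (by omega) _

lemma correction_succ (hK : 1 ≤ K) :
    correction (K + 1) =
      correction K / 2 + 2.08 / 3 * (envelope (K + 1) ^ 2 / mainTerm (K + 1)) := by
  rw [correction, correction, Finset.sum_Icc_succ_top (by omega), envelope_sq, Finset.sum_div]
  congr 1
  · refine Finset.sum_congr rfl fun k _ ↦ ?_
    ring
  · ring

lemma correction_le_envelope (hK : 1 ≤ K) : correction K ≤ (1 + √2) * envelope K := by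
  induction K, hK using Nat.le_induction with
  | base =>
    have hzero : correction 1 = 0 := by simp [correction]
    rw [hzero]
    exact mul_nonneg (by positivity) (envelope_nonneg 1)
  | succ n hn ih =>
    set t : ℝ := ((n + 1 : ℕ) : ℝ)⁻¹
    have ht : 0 < t := by positivity
    have hcoeff : (1 + √2) * (√2 * (1 - t / 2)) / 2 + 2.08 / 3 * (1 + t) ≤ 1 + √2 := by
      have hlower : 1.4 ≤ √2 := le_sqrt_of_sq_le (by norm_num)
      nlinarith [sq_sqrt (zero_le_two (α := ℝ))]
    calc correction (n + 1)
        = correction n / 2 + 2.08 / 3 * (envelope (n + 1) ^ 2 / mainTerm (n + 1)) :=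
          correction_succ hn
      _ ≤ (1 + √2) * (√2 * (1 - t / 2) * envelope (n + 1)) / 2
            + 2.08 / 3 * ((1 + t) * envelope (n + 1)) := by
          gcongr
          · exact ih.trans (by gcongr; exact envelope_le_sqrt_two_mul_envelope_succ n)
          · exact envelope_sq_div_mainTerm_le (by omega)
      _ = ((1 + √2) * (√2 * (1 - t / 2)) / 2 + 2.08 / 3 * (1 + t)) * envelope (n + 1) := by ring
      _ ≤ (1 + √2) * envelope (n + 1) := by
          gcongr
          exact envelope_nonneg _

lemma monotoneOn_mainSum_add_envelope :
    MonotoneOn (fun K ↦ mainSum K + (1 + √2) * envelope K) (Set.Ici 1) := by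
  refine monotoneOn_nat_Ici_of_le_succ fun n hn ↦ ?_
  set t : ℝ := ((n + 1 : ℕ) : ℝ)⁻¹
  have ht : 0 < t := by positivity
  have hcoeff : (1 + √2) * (√2 * (1 - t / 2)) ≤ (1 - t) + (1 + √2) := by
    nlinarith [sq_sqrt (zero_le_two (α := ℝ)), sqrt_nonneg (2 : ℝ)]
  have hstep : (1 + √2) * envelope n ≤ mainTerm (n + 1) + (1 + √2) * envelope (n + 1) :=
    calc (1 + √2) * envelope n
        ≤ (1 + √2) * (√2 * (1 - t / 2) * envelope (n + 1)) := by
          gcongr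
          exact envelope_le_sqrt_two_mul_envelope_succ n
      _ = (1 + √2) * (√2 * (1 - t / 2)) * envelope (n + 1) := by ring
      _ ≤ ((1 - t) + (1 + √2)) * envelope (n + 1) := by
          gcongr
          exact envelope_nonneg _
      _ = (1 - t) * envelope (n + 1) + (1 + √2) * envelope (n + 1) := by ring
      _ ≤ mainTerm (n + 1) + (1 + √2) * envelope (n + 1) := by
          gcongr
          exact one_sub_inv_mul_envelope_le_mainTerm (by omega)
  rw [mainSum_succ hn, add_assoc]
  gcongr

/-- The constant `11 / 4` is the one for which `1 + 4 / 11 = 15 / 11`, the ratio in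
`mul_envelope_succ_le_envelope`. -/
lemma antitoneOn_mainSum_add_envelope :
    AntitoneOn (fun K ↦ mainSum K + 11 / 4 * envelope K) (Set.Ici 14) := by
  refine antitoneOn_nat_Ici_of_succ_le fun n hn ↦ ?_
  rw [mainSum_succ (by omega)]
  linarith [mainTerm_le_envelope (n + 1), mul_envelope_succ_le_envelope hn]

lemma mainSum_fourteen_le : mainSum 14 ≤ 3.1994 := by
  have term_le : ∀ (k : ℕ) (v : ℝ), 0 ≤ v →
      k * (2 : ℝ)⁻¹ ^ k * (1 - (2 : ℝ)⁻¹ ^ k) ≤ v ^ 2 → mainTerm k ≤ v :=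
    fun k v hv h ↦ sqrt_le_iff.mpr ⟨hv, h⟩
  calc mainSum 14
      = mainTerm 2 + mainTerm 3 + mainTerm 4 + mainTerm 5 + mainTerm 6 + mainTerm 7 + mainTerm 8
        + mainTerm 9 + mainTerm 10 + mainTerm 11 + mainTerm 12 + mainTerm 13 + mainTerm 14 := by
        simp [mainSum, Finset.sum_Icc_succ_top]
    _ ≤ 0.61238 + 0.57283 + 0.48413 + 0.38906 + 0.30379 + 0.23294 + 0.17644
        + 0.13246 + 0.09878 + 0.07327 + 0.05412 + 0.03984 + 0.02924 := by
        gcongr <;> exact term_le _ _ (by norm_num) (by norm_num)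
    _ ≤ 3.1994 := by norm_num

lemma mainSum_fourteen_add_envelope_le : mainSum 14 + 11 / 4 * envelope 14 ≤ 3.28 := by
  have henvelope : envelope 14 ≤ 0.02924 := sqrt_le_iff.mpr (by norm_num)
  linarith [mainSum_fourteen_le]

lemma mainSum_add_envelope_le (hK : 1 ≤ K) : mainSum K + (1 + √2) * envelope K ≤ 3.28 := by
  have hconst (n : ℕ) : (1 + √2) * envelope n ≤ 11 / 4 * envelope n := by
    have hsqrt := sqrt_two_lt_three_halves
    exact mul_le_mul_of_nonneg_right (by linarith) (envelope_nonneg n)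
  rcases le_total K 14 with hle | hge
  · calc mainSum K + (1 + √2) * envelope K
        ≤ mainSum 14 + (1 + √2) * envelope 14 :=
          monotoneOn_mainSum_add_envelope hK (Set.mem_Ici.mpr (by norm_num)) hle
      _ ≤ mainSum 14 + 11 / 4 * envelope 14 := by grw [hconst 14]
      _ ≤ 3.28 := mainSum_fourteen_add_envelope_le
  · calc mainSum K + (1 + √2) * envelope K
        ≤ mainSum K + 11 / 4 * envelope K := by grw [hconst K]
      _ ≤ mainSum 14 + 11 / 4 * envelope 14 :=
          antitoneOn_mainSum_add_envelope Set.self_mem_Ici hge hge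
      _ ≤ 3.28 := mainSum_fourteen_add_envelope_le

end PartialSums

section WeightedSum

/-- The coefficient `λ_k`, which depends on `K` as well. -/
noncomputable def lam (K k : ℕ) : ℝ :=
  √(2 * (2 : ℝ)⁻¹ ^ k * (1 - (2 : ℝ)⁻¹ ^ k) + 2.08 * 4 * (2 : ℝ)⁻¹ ^ K / 3)

lemma sqrt_mul_lam_le {k : ℕ} (hk : 1 ≤ k) (K : ℕ) :
    1 / √2 * (√k * lam K k) ≤ mainTerm k + 2.08 / 3 * (2 : ℝ)⁻¹ ^ K * (k / mainTerm k) := by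
  set x : ℝ := k * (2 : ℝ)⁻¹ ^ k * (1 - (2 : ℝ)⁻¹ ^ k)
  set y : ℝ := 2 * (2.08 / 3 * (2 : ℝ)⁻¹ ^ K * k)
  have hx : 0 < x := sqrt_pos.mp (mainTerm_pos hk)
  calc 1 / √2 * (√k * lam K k) = √(x + y) := by
        rw [← mul_assoc, inv_sqrt_two_mul_sqrt, lam, ← sqrt_mul (by positivity)]
        congr 1
        ring
    _ ≤ mainTerm k + y / (2 * mainTerm k) := sqrt_add_le_sqrt_add_div hx (by positivity)
    _ = mainTerm k + 2.08 / 3 * (2 : ℝ)⁻¹ ^ K * (k / mainTerm k) := by ring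

lemma sum_sqrt_mul_lam_le {K : ℕ} (hK : 1 ≤ K) :
    1 / √2 * ∑ k ∈ Finset.Icc 2 K, √k * lam K k ≤ 3.28 :=
  calc 1 / √2 * ∑ k ∈ Finset.Icc 2 K, √k * lam K k
      = ∑ k ∈ Finset.Icc 2 K, 1 / √2 * (√k * lam K k) := Finset.mul_sum ..
    _ ≤ ∑ k ∈ Finset.Icc 2 K, (mainTerm k + 2.08 / 3 * (2 : ℝ)⁻¹ ^ K * (k / mainTerm k)) :=
        Finset.sum_le_sum fun k hk ↦
          sqrt_mul_lam_le (one_le_two.trans (Finset.mem_Icc.mp hk).1) K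
    _ = mainSum K + correction K := Finset.sum_add_distrib
    _ ≤ mainSum K + (1 + √2) * envelope K := by gcongr; exact correction_le_envelope hK
    _ ≤ 3.28 := mainSum_add_envelope_le hK

end WeightedSum

section LogFactor

variable {k : ℕ}

lemma log_two_mul_two_pow_succ_add_one_le (hk : 2 ≤ k) :
    log (2 * ((2 : ℝ) ^ (k + 1) + 1)) ≤ 2 * log 3 + (k - 1) * log 2 := by
  obtain ⟨m, rfl⟩ := Nat.exists_eq_add_of_le' hk
  have hpow : (1 : ℝ) ≤ 2 ^ m := one_le_pow₀ one_le_two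
  calc log (2 * ((2 : ℝ) ^ (m + 2 + 1) + 1))
      ≤ log (3 ^ 2 * 2 ^ (m + 1)) := by
        refine log_le_log (by positivity) ?_
        ring_nf
        linarith
    _ = 2 * log 3 + ((m + 2 : ℕ) - 1) * log 2 := by
        rw [log_mul (by positivity) (by positivity), log_pow, log_pow]
        push_cast
        ring

/-- At `k = 2` the left-hand side is `5.9698…`, which explains the constant `5.98 = 2 · 2.99`. -/
lemma one_add_log_add_mul_log_two_le (hk : 2 ≤ k) :
    1 + log (2 * ((2 : ℝ) ^ (k + 1) + 1)) + (k + 1) * log 2 ≤ 2.99 * k := by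
  have hk' : (2 : ℝ) ≤ k := by exact_mod_cast hk
  calc 1 + log (2 * ((2 : ℝ) ^ (k + 1) + 1)) + (k + 1) * log 2
      ≤ 1 + (2 * log 3 + (k - 1) * log 2) + (k + 1) * log 2 := by
        gcongr
        exact log_two_mul_two_pow_succ_add_one_le hk
    _ = 1 + 2 * log 3 + 2 * k * log 2 := by ring
    _ ≤ 1 + 2 * 1.0986122888 + 2 * k * 0.6931471808 := by
        gcongr
        · exact log_three_lt_d9.le
        · exact log_two_lt_d9.le
    _ ≤ 2.99 * k := by linarith

lemma sqrt_log_factor_le (hk : 2 ≤ k) {s a : ℝ} (hs : 1 ≤ s) (ha : 1 ≤ a) :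
    √(1 + log (2 * ((2 : ℝ) ^ (k + 1) + 1)) + log ((2 : ℝ) ^ (k + 1) * a) / s)
      ≤ 1 / √2 * √k * √(5.98 + log a / s) := by
  have hk' : (2 : ℝ) ≤ k := by exact_mod_cast hk
  have hlog : 0 ≤ log a / s := div_nonneg (log_nonneg ha) (by linarith)
  rw [inv_sqrt_two_mul_sqrt, ← sqrt_mul (by positivity)]
  refine sqrt_le_sqrt ?_
  calc 1 + log (2 * ((2 : ℝ) ^ (k + 1) + 1)) + log ((2 : ℝ) ^ (k + 1) * a) / s
      = 1 + log (2 * ((2 : ℝ) ^ (k + 1) + 1)) + (k + 1) * log 2 / s + log a / s := by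
        rw [log_mul (x := 2 ^ (k + 1)) (by positivity) (by positivity), log_pow]
        push_cast
        ring
    _ ≤ 1 + log (2 * ((2 : ℝ) ^ (k + 1) + 1)) + (k + 1) * log 2 + k / 2 * (log a / s) := by
        gcongr
        · exact div_le_self (by positivity) hs
        · exact le_mul_of_one_le_left hlog (by linarith)
    _ ≤ 2.99 * k + k / 2 * (log a / s) := by
        gcongr
        exact one_add_log_add_mul_log_two_le hk
    _ = k / 2 * (5.98 + log a / s) := by ring

lemma sum_lam_mul_sqrt_log_factor_le {K : ℕ} (hK : 1 ≤ K) {s a : ℝ} (hs : 1 ≤ s) (ha : 1 ≤ a) :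
    ∑ k ∈ Finset.Icc 2 K, lam K k *
        √(1 + log (2 * ((2 : ℝ) ^ (k + 1) + 1)) + log ((2 : ℝ) ^ (k + 1) * a) / s)
      ≤ 3.28 * √(5.98 + log a / s) :=
  calc _ ≤ ∑ k ∈ Finset.Icc 2 K, lam K k * (1 / √2 * √k * √(5.98 + log a / s)) :=
        Finset.sum_le_sum fun _ hk ↦ mul_le_mul_of_nonneg_left
          (sqrt_log_factor_le (Finset.mem_Icc.mp hk).1 hs ha) (sqrt_nonneg _)
    _ = (1 / √2 * ∑ k ∈ Finset.Icc 2 K, √k * lam K k) * √(5.98 + log a / s) := by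
        rw [Finset.mul_sum, Finset.sum_mul]
        refine Finset.sum_congr rfl fun k _ ↦ ?_
        ring
    _ ≤ 3.28 * √(5.98 + log a / s) := by gcongr; exact sum_sqrt_mul_lam_le hK

end LogFactor

theorem stmt_17 (K : ℕ) (hK : 3 ≤ K) (s : ℝ) (hs : 1 ≤ s) (q : ℝ) (hq : q ∈ Set.Ioo (0:ℝ) 1) :
    (∑ k ∈ Finset.Icc 2 K,
        Real.sqrt (2 * (2:ℝ)⁻¹ ^ k * (1 - (2:ℝ)⁻¹ ^ k) + 2.08 * 4 * (2:ℝ)⁻¹ ^ K / 3)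
          * Real.sqrt (1 + Real.log (2 * ((2:ℝ) ^ (k + 1) + 1))
              + Real.log ((2:ℝ) ^ (k + 1) * (1 - q)⁻¹) / s))
      ≤ 3.28 * Real.sqrt (5.98 + Real.log (1 - q)⁻¹ / s) ∧
    (1 / Real.sqrt 2) * ∑ k ∈ Finset.Icc 2 K, Real.sqrt (k : ℝ)
        * Real.sqrt (2 * (2:ℝ)⁻¹ ^ k * (1 - (2:ℝ)⁻¹ ^ k) + 2.08 * 4 * (2:ℝ)⁻¹ ^ K / 3)
      ≤ 3.28 := by
  have one_le_K : 1 ≤ K := by omega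
  have one_le_inv : 1 ≤ (1 - q)⁻¹ :=
    (one_le_inv₀ (sub_pos.mpr hq.2)).mpr (sub_le_self 1 hq.1.le)
  exact ⟨sum_lam_mul_sqrt_log_factor_le one_le_K hs one_le_inv, sum_sqrt_mul_lam_le one_le_K⟩
end

section
/- For every real x ≥ 0: √(1 + x) + (1/√2)·√(4.88 + x) + (1/√2)·√(5.39 + x) + 3.28·√(5.98 + x) ≤ 5.7·√(4.9 + x). -/
open Real

/-! By the Cauchy–Schwarz inequality, a sum `∑ wᵢ √(aᵢ + x)`
with nonnegative weights of total `W` is at most `W √(m + x)` whenever `∑ wᵢ aᵢ ≤ W m`, a condition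
that does not involve `x`. Here `m = 4.9` and `W = 4.28 + √2 < 5.7`. -/

lemma sum_mul_sqrt_le_of_sum_mul_le {ι : Type*} (s : Finset ι) {w z : ι → ℝ} {y : ℝ}
    (hw : ∀ i ∈ s, 0 ≤ w i) (hz : ∀ i ∈ s, 0 ≤ z i) (h : ∑ i ∈ s, w i * z i ≤ (∑ i ∈ s, w i) * y) :
    ∑ i ∈ s, w i * √(z i) ≤ (∑ i ∈ s, w i) * √y := by
  have hW : 0 ≤ ∑ i ∈ s, w i := Finset.sum_nonneg hw
  have cauchy_schwarz :
      (∑ i ∈ s, w i * √(z i)) ^ 2 ≤ (∑ i ∈ s, w i) * ∑ i ∈ s, w i * z i := by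
    refine Finset.sum_sq_le_sum_mul_sum_of_sq_le_mul s hw
      (fun i hi ↦ mul_nonneg (hw i hi) (hz i hi)) fun i hi ↦ ?_
    rw [mul_pow, sq_sqrt (hz i hi), sq, mul_assoc]
  calc ∑ i ∈ s, w i * √(z i)
      ≤ √((∑ i ∈ s, w i) ^ 2 * y) := le_sqrt_of_sq_le <| by
        linarith [mul_le_mul_of_nonneg_left h hW]
    _ = (∑ i ∈ s, w i) * √y := by rw [sqrt_mul (sq_nonneg _), sqrt_sq hW]

lemma sum_mul_sqrt_add_le_of_sum_mul_le {ι : Type*} (s : Finset ι) {w a : ι → ℝ} {m x : ℝ}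
    (hw : ∀ i ∈ s, 0 ≤ w i) (hx : ∀ i ∈ s, 0 ≤ a i + x)
    (h : ∑ i ∈ s, w i * a i ≤ (∑ i ∈ s, w i) * m) :
    ∑ i ∈ s, w i * √(a i + x) ≤ (∑ i ∈ s, w i) * √(m + x) := by
  refine sum_mul_sqrt_le_of_sum_mul_le s hw hx ?_
  simp only [mul_add, Finset.sum_add_distrib, ← Finset.sum_mul]
  gcongr

theorem stmt_18_general (x : ℝ) (hx : -1 ≤ x) :
    √(1 + x) + (1 / √2) * √(4.88 + x) + (1 / √2) * √(5.39 + x) + 3.28 * √(5.98 + x)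
      ≤ (4.28 + √2) * √(4.9 + x) := by
  let w : Fin 4 → ℝ := ![1, √2 / 2, √2 / 2, 3.28]
  let a : Fin 4 → ℝ := ![1, 4.88, 5.39, 5.98]
  have hw : ∀ i, 0 ≤ w i := by norm_num [w, Fin.forall_fin_succ, div_nonneg]
  have ha : ∀ i, 1 ≤ a i := by norm_num [a, Fin.forall_fin_succ]
  have sum_w : ∑ i, w i = 4.28 + √2 := by
    simp only [w, Fin.sum_univ_four, Matrix.cons_val]
    ring
  have sum_w_mul_a : ∑ i, w i * a i ≤ (∑ i, w i) * 4.9 := by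
    rw [sum_w]
    simp only [w, a, Fin.sum_univ_four, Matrix.cons_val]
    linarith [sqrt_two_lt_three_halves]
  calc √(1 + x) + (1 / √2) * √(4.88 + x) + (1 / √2) * √(5.39 + x) + 3.28 * √(5.98 + x)
      = ∑ i, w i * √(a i + x) := by
        simp only [w, a, Fin.sum_univ_four, Matrix.cons_val, one_mul, sqrt_div_self']
    _ ≤ (∑ i, w i) * √(4.9 + x) :=
        sum_mul_sqrt_add_le_of_sum_mul_le _ (fun i _ ↦ hw i)
          (fun i _ ↦ by linarith [ha i]) sum_w_mul_a
    _ = (4.28 + √2) * √(4.9 + x) := by rw [sum_w]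

theorem stmt_18 (x : ℝ) (hx : 0 ≤ x) :
    Real.sqrt (1 + x) + (1 / Real.sqrt 2) * Real.sqrt (4.88 + x)
        + (1 / Real.sqrt 2) * Real.sqrt (5.39 + x) + 3.28 * Real.sqrt (5.98 + x)
      ≤ 5.7 * Real.sqrt (4.9 + x) := by
  have sqrt_two_le : √2 ≤ 1.42 := sqrt_le_iff.mpr (by norm_num)
  exact (stmt_18_general x (by linarith)).trans (by gcongr; linarith)
end
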